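/- arXiv:1404.5999 — 9 statements merged into one kernel-verified Lean document; each statement's English description precedes it below -/
import Mathlib

section
/- Let n ≥ 1, let x ∈ (0,1), and let ρ₁, ρ₂ be density matrices (n×n complex positive semidefinite matrices of trace 1), and set ρ_Av := x·ρ₁ + (1−x)·ρ₂. Then S(ρ_Av) − x·S(ρ₁) − (1−x)·S(ρ₂) ≥ (1/2)·x·(1−x)·‖ρ₁ − ρ₂‖₁². -/
open Matrix ComplexOrder

/-- Apply a real function to a Hermitian matrix via the spectral decomposition
`A = U D U*`: the result is `U (f(D)) U*` where `f` acts on the diagonal. -/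
noncomputable def mfun {m : Type*} [Fintype m] [DecidableEq m]
    (f : ℝ → ℝ) (A : Matrix m m ℂ) : Matrix m m ℂ :=
  if hA : A.IsHermitian then hA.cfc f else 0

/-- Matrix logarithm via spectral decomposition, with the convention `log 0 = 0`
(note `Real.log 0 = 0`). -/
noncomputable def matLog {m : Type*} [Fintype m] [DecidableEq m]
    (A : Matrix m m ℂ) : Matrix m m ℂ :=
  mfun Real.log A

/-- The positive semidefinite square root of a positive semidefinite matrix,
via spectral decomposition. -/
noncomputable def matSqrt {m : Type*} [Fintype m] [DecidableEq m]
    (A : Matrix m m ℂ) : Matrix m m ℂ :=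
  mfun Real.sqrt A

/-- Real power of a (positive semidefinite / positive definite) matrix via spectral
decomposition. -/
noncomputable def matRpow {m : Type*} [Fintype m] [DecidableEq m]
    (t : ℝ) (A : Matrix m m ℂ) : Matrix m m ℂ :=
  mfun (fun u => u ^ t) A

/-- The von Neumann entropy `S(ρ) = -Tr(ρ log ρ)`. -/
noncomputable def vnEntropy {m : Type*} [Fintype m] [DecidableEq m]
    (ρ : Matrix m m ℂ) : ℝ :=
  -(Matrix.trace (ρ * matLog ρ)).re

/-- The quantum relative entropy `H(ρ, γ) = Tr(ρ (log ρ - log γ))`. -/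
noncomputable def relEntropy {m : Type*} [Fintype m] [DecidableEq m]
    (ρ γ : Matrix m m ℂ) : ℝ :=
  (Matrix.trace (ρ * (matLog ρ - matLog γ))).re

/-- The trace norm of a Hermitian matrix: the sum of the absolute values of its
eigenvalues. -/
noncomputable def traceNorm {m : Type*} [Fintype m] [DecidableEq m]
    (A : Matrix m m ℂ) : ℝ :=
  if hA : A.IsHermitian then ∑ i, |hA.eigenvalues i| else 0

/-- A density matrix: positive semidefinite with trace 1. -/
def IsDensity {m : Type*} [Fintype m] [DecidableEq m] (ρ : Matrix m m ℂ) : Prop :=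
  ρ.PosSemidef ∧ Matrix.trace ρ = 1

/-- The binary entropy `h(x) = -x log x - (1-x) log (1-x)`. -/
noncomputable def binEntropy (x : ℝ) : ℝ :=
  -(x * Real.log x) - (1 - x) * Real.log (1 - x)

/-- The Renyi relative entropy `H_a(ρ,γ) = (a-1)⁻¹ log Tr(ρ^a γ^(1-a))`. -/
noncomputable def renyiRel {m : Type*} [Fintype m] [DecidableEq m]
    (a : ℝ) (ρ γ : Matrix m m ℂ) : ℝ :=
  (a - 1)⁻¹ * Real.log (Matrix.trace (matRpow a ρ * matRpow (1 - a) γ)).re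

/-- The sandwiched Renyi relative entropy
`H̃_a(ρ,γ) = (a-1)⁻¹ log Tr((γ^((1-a)/(2a)) ρ γ^((1-a)/(2a)))^a)`. -/
noncomputable def sandRenyiRel {m : Type*} [Fintype m] [DecidableEq m]
    (a : ℝ) (ρ γ : Matrix m m ℂ) : ℝ :=
  (a - 1)⁻¹ * Real.log
    (Matrix.trace (matRpow a
      (matRpow ((1 - a) / (2 * a)) γ * ρ * matRpow ((1 - a) / (2 * a)) γ))).re

lemma aux_log (t : ℝ) (ht : 0 < t) :
    (t - 1) * (5 * t + 1) / (2 * t * (t + 2)) ≤ Real.log t := by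
  set h : ℝ → ℝ := fun t => Real.log t - (t - 1) * (5 * t + 1) / (2 * t * (t + 2)) with hh
  have hd : ∀ s : ℝ, 0 < s → HasDerivAt h ((s - 1) ^ 3 / (s ^ 2 * (s + 2) ^ 2)) s := by
    intro s hs
    have e1 := Real.hasDerivAt_log hs.ne'
    have e2 : HasDerivAt (fun t : ℝ => (t - 1) * (5 * t + 1))
        (1 * (5 * s + 1) + (s - 1) * (5 * 1)) s :=
      ((hasDerivAt_id s).sub_const 1).mul (((hasDerivAt_id s).const_mul 5).add_const 1)
    have e3 : HasDerivAt (fun t : ℝ => 2 * t * (t + 2))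
        (2 * 1 * (s + 2) + 2 * s * 1) s :=
      ((hasDerivAt_id s).const_mul 2).mul ((hasDerivAt_id s).add_const 2)
    have e4 := e1.sub (e2.div e3 (by positivity))
    refine e4.congr_deriv ?_
    field_simp
    ring
  have h1 : h 1 = 0 := by simp [hh]
  have key : 0 ≤ h t := by
    rw [← h1]
    rcases le_total 1 t with h1t | h1t
    · have : MonotoneOn h (Set.Ici 1) := by
        apply monotoneOn_of_deriv_nonneg (convex_Ici 1)
        · intro s hs
          exact (hd s (by simp at hs; linarith)).continuousAt.continuousWithinAt
        · intro s hs
          simp at hs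
          exact (hd s (by linarith)).differentiableAt.differentiableWithinAt
        · intro s hs
          simp at hs
          rw [(hd s (by linarith)).deriv]
          have : 0 ≤ s - 1 := by linarith
          positivity
      exact this (by simp) h1t h1t
    · have : AntitoneOn h (Set.Ioc 0 1) := by
        apply antitoneOn_of_deriv_nonpos (convex_Ioc 0 1)
        · intro s hs
          exact (hd s hs.1).continuousAt.continuousWithinAt
        · intro s hs
          simp at hs
          exact (hd s (by linarith)).differentiableAt.differentiableWithinAt
        · intro s hs
          simp at hs
          rw [(hd s (by linarith)).deriv]
          apply div_nonpos_of_nonpos_of_nonneg _ (by positivity)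
          have : 0 ≤ 1 - s := by linarith
          have := pow_nonneg this 3
          nlinarith
      exact this ⟨ht, h1t⟩ (by simp) h1t
  simp only [hh] at key
  linarith

lemma aux_scalar (p q : ℝ) (hp : 0 ≤ p) (hq : 0 < q) :
    (p - q) ^ 2 ≤ (p * Real.log p - p * Real.log q - p + q) * ((2 * p + 4 * q) / 3) := by
  rcases hp.eq_or_lt with rfl | hp
  · simp; nlinarith
  have h := aux_log (p / q) (by positivity)
  rw [Real.log_div hp.ne' hq.ne'] at h
  have e : (p / q - 1) * (5 * (p / q) + 1) / (2 * (p / q) * (p / q + 2))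
    = (p - q) * (5 * p + q) / (2 * p * (p + 2 * q)) := by
    field_simp
  rw [e, div_le_iff₀ (by positivity)] at h
  nlinarith

lemma aux_row {n : ℕ} (C : Matrix (Fin n) (Fin n) ℂ) (h : C * Cᴴ = 1) (i : Fin n) :
    ∑ j, ‖C i j‖ ^ 2 = 1 := by
  have := congrFun (congrFun h i) i
  simp only [Matrix.mul_apply, Matrix.conjTranspose_apply, Matrix.one_apply_eq,
    Complex.star_def, Complex.mul_conj'] at this
  exact_mod_cast this

lemma aux_col {n : ℕ} (C : Matrix (Fin n) (Fin n) ℂ) (h : Cᴴ * C = 1) (j : Fin n) :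
    ∑ i, ‖C i j‖ ^ 2 = 1 := by
  have := congrFun (congrFun h j) j
  simp only [Matrix.mul_apply, Matrix.conjTranspose_apply, Matrix.one_apply_eq,
    Complex.star_def, Complex.conj_mul'] at this
  exact_mod_cast this

lemma aux_core {n : ℕ} (C K : Matrix (Fin n) (Fin n) ℂ) (p q : Fin n → ℝ)
    (hC : C * Cᴴ = 1) (hC' : Cᴴ * C = 1) (hK : K * Kᴴ = 1) (hK' : Kᴴ * K = 1)
    (hp : ∀ i, 0 ≤ p i) (hq : ∀ i, 0 ≤ q i) (hp1 : ∑ i, p i = 1) (hq1 : ∑ i, q i = 1)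
    (hs : ∀ i j, q j = 0 → p i = 0 ∨ C i j = 0) (N : ℝ) (hN0 : 0 ≤ N)
    (hN : (N : ℂ) = Matrix.trace (K * (Matrix.diagonal (fun i => (p i : ℂ)) * C
      - C * Matrix.diagonal (fun i => (q i : ℂ))))) :
    N ^ 2 ≤ 2 * (∑ i, p i * Real.log (p i)
      - ∑ i, ∑ j, ‖C i j‖ ^ 2 * (p i * Real.log (q j))) := by
  have hb : N ≤ ∑ i, ∑ j, ‖C i j‖ * |p i - q j| * ‖K j i‖ := by
    have h1 : N = ‖(N : ℂ)‖ := by simp [abs_of_nonneg hN0]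
    rw [h1, hN, Matrix.trace]
    simp only [Matrix.diag_apply, Matrix.mul_apply (M := K)]
    rw [Finset.sum_comm]
    refine (norm_sum_le _ _).trans (Finset.sum_le_sum fun i _ => ?_)
    refine (norm_sum_le _ _).trans (Finset.sum_le_sum fun j _ => ?_)
    rw [Matrix.sub_apply, Matrix.diagonal_mul, Matrix.mul_diagonal]
    have : K j i * ((p i : ℂ) * C i j - C i j * (q j : ℂ))
        = C i j * ((p i - q j : ℝ) : ℂ) * K j i := by push_cast; ring
    rw [this, norm_mul, norm_mul, Complex.norm_real, Real.norm_eq_abs]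
  have e1 : ∀ f : Fin n → ℝ, ∑ i, ∑ j, ‖C i j‖ ^ 2 * f i = ∑ i, f i := by
    intro f
    refine Finset.sum_congr rfl fun i _ => ?_
    rw [← Finset.sum_mul, aux_row C hC, one_mul]
  have e2 : ∀ f : Fin n → ℝ, ∑ i, ∑ j, ‖C i j‖ ^ 2 * f j = ∑ i, f i := by
    intro f
    rw [Finset.sum_comm]
    refine Finset.sum_congr rfl fun i _ => ?_
    rw [← Finset.sum_mul, aux_col C hC', one_mul]
  have e3 : ∀ f : Fin n → ℝ, ∑ i, ∑ j, ‖K j i‖ ^ 2 * f i = ∑ i, f i := by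
    intro f
    refine Finset.sum_congr rfl fun i _ => ?_
    rw [← Finset.sum_mul, aux_col K hK', one_mul]
  have e4 : ∀ f : Fin n → ℝ, ∑ i, ∑ j, ‖K j i‖ ^ 2 * f j = ∑ i, f i := by
    intro f
    rw [Finset.sum_comm]
    refine Finset.sum_congr rfl fun i _ => ?_
    rw [← Finset.sum_mul, aux_row K hK, one_mul]
  have hcs := Finset.sum_sq_le_sum_mul_sum_of_sq_le_mul
    (Finset.univ : Finset (Fin n × Fin n))
    (r := fun x => ‖C x.1 x.2‖ * |p x.1 - q x.2| * ‖K x.2 x.1‖)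
    (f := fun x => ‖C x.1 x.2‖ ^ 2 *
      (p x.1 * Real.log (p x.1) - p x.1 * Real.log (q x.2) - p x.1 + q x.2))
    (g := fun x => ‖K x.2 x.1‖ ^ 2 * ((2 * p x.1 + 4 * q x.2) / 3))
    (by
      rintro ⟨i, j⟩ -
      simp only
      rcases (hq j).eq_or_lt with h0 | h0
      · rcases hs i j h0.symm with h | h <;> simp [h, ← h0]
      · have := aux_scalar (p i) (q j) (hp i) h0
        refine mul_nonneg (by positivity) ?_
        have h2 : 0 < (2 * p i + 4 * q j) / 3 := by linarith [hp i]
        exact nonneg_of_mul_nonneg_left ((sq_nonneg _).trans this) h2)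
    (by
      rintro ⟨i, j⟩ -
      have := hp i
      have := hq j
      positivity)
    (by
      rintro ⟨i, j⟩ -
      simp only
      rcases (hq j).eq_or_lt with h0 | h0
      · rcases hs i j h0.symm with h | h <;> simp [h, ← h0]
      · have := aux_scalar (p i) (q j) (hp i) h0
        have h3 : 0 ≤ ‖C i j‖ ^ 2 * ‖K j i‖ ^ 2 := by positivity
        have h4 := mul_le_mul_of_nonneg_left this h3
        rw [mul_pow, mul_pow, sq_abs]
        linarith)
  simp only [Fintype.sum_prod_type] at hcs
  have hg : ∑ i, ∑ j, ‖K j i‖ ^ 2 * ((2 * p i + 4 * q j) / 3) = 2 := by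
    have : ∀ i j, ‖K j i‖ ^ 2 * ((2 * p i + 4 * q j) / 3)
      = ‖K j i‖ ^ 2 * (2 / 3 * p i) + ‖K j i‖ ^ 2 * (4 / 3 * q j) := by intros; ring
    simp only [this, Finset.sum_add_distrib]
    rw [e3 (fun i => 2 / 3 * p i), e4 (fun i => 4 / 3 * q i), ← Finset.mul_sum,
      ← Finset.mul_sum, hp1, hq1]
    norm_num
  have hf : ∑ i, ∑ j, ‖C i j‖ ^ 2 *
      (p i * Real.log (p i) - p i * Real.log (q j) - p i + q j)
      = ∑ i, p i * Real.log (p i) - ∑ i, ∑ j, ‖C i j‖ ^ 2 * (p i * Real.log (q j)) := by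
    have : ∀ i j, ‖C i j‖ ^ 2 * (p i * Real.log (p i) - p i * Real.log (q j) - p i + q j)
      = ‖C i j‖ ^ 2 * (p i * Real.log (p i)) - ‖C i j‖ ^ 2 * (p i * Real.log (q j))
        - ‖C i j‖ ^ 2 * p i + ‖C i j‖ ^ 2 * q j := by intros; ring
    simp only [this, Finset.sum_add_distrib, Finset.sum_sub_distrib]
    rw [e1 (fun i => p i * Real.log (p i)), e1 p, e2 q, hp1, hq1]
    ring
  rw [hg, hf] at hcs
  have := pow_le_pow_left₀ hN0 hb 2
  linarith

lemma aux_spec {n : ℕ} (A : Matrix (Fin n) (Fin n) ℂ) (hA : A.IsHermitian) :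
    ∃ U : Matrix (Fin n) (Fin n) ℂ, U * Uᴴ = 1 ∧ Uᴴ * U = 1 ∧
      A = U * Matrix.diagonal (fun i => (hA.eigenvalues i : ℂ)) * Uᴴ ∧
      matLog A = U * Matrix.diagonal (fun i => (Real.log (hA.eigenvalues i) : ℂ)) * Uᴴ := by
  refine ⟨hA.eigenvectorUnitary, ?_, ?_, ?_, ?_⟩
  · exact Unitary.mul_star_self_of_mem hA.eigenvectorUnitary.2
  · exact Unitary.star_mul_self_of_mem hA.eigenvectorUnitary.2
  · conv_lhs => rw [hA.spectral_theorem, Unitary.conjStarAlgAut_apply]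
    rfl
  · rw [matLog, mfun, dif_pos hA, Matrix.IsHermitian.cfc, Unitary.conjStarAlgAut_apply]
    rfl

lemma aux_tr {n : ℕ} (U V : Matrix (Fin n) (Fin n) ℂ) (p l : Fin n → ℝ) :
    (Matrix.trace ((U * Matrix.diagonal (fun i => (p i : ℂ)) * Uᴴ) *
      (V * Matrix.diagonal (fun i => (l i : ℂ)) * Vᴴ)))
      = ((∑ i, ∑ j, ‖(Uᴴ * V) i j‖ ^ 2 * (p i * l j) : ℝ) : ℂ) := by
  have : (U * Matrix.diagonal (fun i => (p i : ℂ)) * Uᴴ) *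
      (V * Matrix.diagonal (fun i => (l i : ℂ)) * Vᴴ)
      = U * (Matrix.diagonal (fun i => (p i : ℂ)) * (Uᴴ * V) *
        Matrix.diagonal (fun i => (l i : ℂ)) * Vᴴ) := by simp only [Matrix.mul_assoc]
  rw [this, Matrix.trace_mul_comm, Matrix.mul_assoc _ Vᴴ U]
  have h2 : Vᴴ * U = (Uᴴ * V)ᴴ := by simp [Matrix.conjTranspose_mul]
  rw [h2]
  set C := Uᴴ * V
  rw [Matrix.trace]
  push_cast
  refine Finset.sum_congr rfl fun i _ => ?_
  rw [Matrix.diag_apply, Matrix.mul_apply]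
  refine Finset.sum_congr rfl fun j _ => ?_
  rw [Matrix.mul_diagonal, Matrix.diagonal_mul, Matrix.conjTranspose_apply, Complex.star_def,
    ← Complex.mul_conj']
  ring

lemma aux_pinsker {n : ℕ} (ρ γ : Matrix (Fin n) (Fin n) ℂ) (h1 : IsDensity ρ) (h2 : IsDensity γ)
    (x : ℝ) (hx : 0 < x) (h : (γ - x • ρ).PosSemidef)
    (Δ : Matrix (Fin n) (Fin n) ℂ) (hΔ : Δ.IsHermitian) (c : ℝ) (hc : ρ - γ = c • Δ) :
    c ^ 2 * traceNorm Δ ^ 2 ≤ 2 * ((Matrix.trace (ρ * matLog ρ)).re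
      - (Matrix.trace (ρ * matLog γ)).re) := by
  have hρ := h1.1.isHermitian
  have hγ := h2.1.isHermitian
  obtain ⟨U, hU, hU', eU, lU⟩ := aux_spec ρ hρ
  obtain ⟨V, hV, hV', eV, lV⟩ := aux_spec γ hγ
  obtain ⟨W, hW, hW', eW', -⟩ := aux_spec _ hΔ
  have hp := h1.1.eigenvalues_nonneg
  have hq := h2.1.eigenvalues_nonneg
  have hp1 : ∑ i, hρ.eigenvalues i = 1 := by
    have := hρ.trace_eq_sum_eigenvalues
    rw [h1.2] at this
    have h3 := congrArg Complex.re this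
    simpa using h3.symm
  have hq1 : ∑ i, hγ.eigenvalues i = 1 := by
    have := hγ.trace_eq_sum_eigenvalues
    rw [h2.2] at this
    have h3 := congrArg Complex.re this
    simpa using h3.symm
  rw [traceNorm, dif_pos hΔ]
  generalize hρ.eigenvalues = p at eU lU hp hp1
  generalize hγ.eigenvalues = q at eV lV hq hq1
  have eW : ρ - γ = W * Matrix.diagonal (fun i => ((c * hΔ.eigenvalues i : ℝ) : ℂ)) * Wᴴ := by
    have e : Matrix.diagonal (fun i => ((c * hΔ.eigenvalues i : ℝ) : ℂ))
        = c • Matrix.diagonal (fun i => (hΔ.eigenvalues i : ℂ)) := by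
      rw [← Matrix.diagonal_smul]
      congr 1
      ext i
      simp
    rw [e, Matrix.mul_smul, Matrix.smul_mul, ← eW', hc]
  have eN : c ^ 2 * (∑ i, |hΔ.eigenvalues i|) ^ 2 = (∑ i, |c * hΔ.eigenvalues i|) ^ 2 := by
    simp only [abs_mul]
    rw [← Finset.mul_sum, mul_pow, sq_abs]
  rw [eN]
  clear eN eW'
  obtain ⟨d, hd⟩ : ∃ d : Fin n → ℝ, ∀ i, c * hΔ.eigenvalues i = d i := ⟨_, fun _ => rfl⟩
  simp only [hd] at eW ⊢
  set s : Fin n → ℂ := fun i => if 0 ≤ d i then 1 else -1 with hs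
  set G := W * Matrix.diagonal s * Wᴴ with hG
  have hss : Matrix.diagonal s * Matrix.diagonal s = 1 := by
    rw [Matrix.diagonal_mul_diagonal, ← Matrix.diagonal_one]
    congr 1
    ext i
    simp only [hs]
    split_ifs <;> simp
  have hGH : Gᴴ = G := by
    have : (Matrix.diagonal s)ᴴ = Matrix.diagonal s := by
      rw [Matrix.diagonal_conjTranspose]
      congr 1
      ext i
      simp only [hs, Pi.star_apply]
      split_ifs <;> simp
    simp only [hG, Matrix.conjTranspose_mul, this, Matrix.conjTranspose_conjTranspose,
      Matrix.mul_assoc]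
  have hGG : G * G = 1 := by
    calc G * G = W * (Matrix.diagonal s * (Wᴴ * W) * Matrix.diagonal s) * Wᴴ := by
          simp only [hG, Matrix.mul_assoc]
      _ = 1 := by rw [hW', Matrix.mul_one, hss, Matrix.mul_one, hW]
  have key := aux_core (Uᴴ * V) (Vᴴ * G * U) p q
    (by
      calc Uᴴ * V * (Uᴴ * V)ᴴ = Uᴴ * (V * Vᴴ) * U := by
            simp only [Matrix.conjTranspose_mul, Matrix.conjTranspose_conjTranspose,
              Matrix.mul_assoc]
        _ = 1 := by rw [hV, Matrix.mul_one, hU'])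
    (by
      calc (Uᴴ * V)ᴴ * (Uᴴ * V) = Vᴴ * (U * Uᴴ) * V := by
            simp only [Matrix.conjTranspose_mul, Matrix.conjTranspose_conjTranspose,
              Matrix.mul_assoc]
        _ = 1 := by rw [hU, Matrix.mul_one, hV'])
    (by
      calc (Vᴴ * G * U) * (Vᴴ * G * U)ᴴ = Vᴴ * (G * (U * Uᴴ) * G) * V := by
            simp only [Matrix.conjTranspose_mul, Matrix.conjTranspose_conjTranspose,
              Matrix.mul_assoc, hGH]
        _ = 1 := by rw [hU, Matrix.mul_one, hGG, Matrix.mul_one, hV'])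
    (by
      calc (Vᴴ * G * U)ᴴ * (Vᴴ * G * U) = Uᴴ * (G * (V * Vᴴ) * G) * U := by
            simp only [Matrix.conjTranspose_mul, Matrix.conjTranspose_conjTranspose,
              Matrix.mul_assoc, hGH]
        _ = 1 := by rw [hV, Matrix.mul_one, hGG, Matrix.mul_one, hU'])
    hp hq hp1 hq1
    (by
      intro i j hj
      have hd := (h.conjTranspose_mul_mul_same V).diag_nonneg (i := j)
      have e : Vᴴ * (γ - x • ρ) * V = Matrix.diagonal (fun i => (q i : ℂ))
          - (x : ℂ) • ((Uᴴ * V)ᴴ * (Matrix.diagonal (fun i => (p i : ℂ)) * (Uᴴ * V))) := by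
        have e1 : Vᴴ * γ * V = Matrix.diagonal (fun i => (q i : ℂ)) := by
          calc Vᴴ * γ * V = (Vᴴ * V) * Matrix.diagonal (fun i => (q i : ℂ)) * (Vᴴ * V) := by
                rw [eV]; simp only [Matrix.mul_assoc]
            _ = _ := by rw [hV', Matrix.mul_one, Matrix.one_mul]
        have e2 : Vᴴ * ρ * V
            = (Uᴴ * V)ᴴ * (Matrix.diagonal (fun i => (p i : ℂ)) * (Uᴴ * V)) := by
          rw [eU]
          simp only [Matrix.conjTranspose_mul, Matrix.conjTranspose_conjTranspose,
              Matrix.mul_assoc]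
        rw [Matrix.mul_sub, Matrix.sub_mul, e1, ← e2, Matrix.mul_smul, Matrix.smul_mul]
        rfl
      rw [e, Matrix.sub_apply, Matrix.diagonal_apply_eq, hj, Matrix.smul_apply,
        Matrix.mul_apply] at hd
      have e5 : ∀ k, (Uᴴ * V)ᴴ j k * (Matrix.diagonal (fun i => (p i : ℂ)) * (Uᴴ * V)) k j
          = ((p k * ‖(Uᴴ * V) k j‖ ^ 2 : ℝ) : ℂ) := by
        intro k
        rw [Matrix.diagonal_mul, Matrix.conjTranspose_apply, Complex.star_def]
        push_cast
        rw [← Complex.mul_conj']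
        ring
      simp only [e5, smul_eq_mul] at hd
      have hd2 : 0 ≤ 0 - x * ∑ k, p k * ‖(Uᴴ * V) k j‖ ^ 2 := by exact_mod_cast hd
      have hnn : ∀ k ∈ Finset.univ, 0 ≤ p k * ‖(Uᴴ * V) k j‖ ^ 2 :=
        fun k _ => mul_nonneg (hp k) (by positivity)
      have h0 : ∑ k, p k * ‖(Uᴴ * V) k j‖ ^ 2 = 0 :=
        le_antisymm (by by_contra hc; push Not at hc; nlinarith [mul_pos hx hc])
          (Finset.sum_nonneg hnn)
      have := (Finset.sum_eq_zero_iff_of_nonneg hnn).1 h0 i (Finset.mem_univ i)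
      simpa using this)
    (∑ i, |d i|) (Finset.sum_nonneg fun _ _ => abs_nonneg _)
    (by
      have e1 : Matrix.diagonal (fun i => (p i : ℂ)) * (Uᴴ * V)
          - Uᴴ * V * Matrix.diagonal (fun i => (q i : ℂ)) = Uᴴ * (ρ - γ) * V := by
        rw [Matrix.mul_sub, Matrix.sub_mul]
        congr 1
        · calc _ = (Uᴴ * U) * (Matrix.diagonal (fun i => (p i : ℂ)) * (Uᴴ * V)) := by
                rw [hU', Matrix.one_mul]
            _ = _ := by rw [eU]; simp only [Matrix.mul_assoc]
        · calc _ = Uᴴ * V * Matrix.diagonal (fun i => (q i : ℂ)) * (Vᴴ * V) := by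
                rw [hV', Matrix.mul_one]
            _ = _ := by rw [eV]; simp only [Matrix.mul_assoc]
      rw [e1]
      have e2 : Vᴴ * G * U * (Uᴴ * (ρ - γ) * V) = Vᴴ * (G * (ρ - γ) * V) := by
        calc _ = Vᴴ * G * (U * Uᴴ) * ((ρ - γ) * V) := by simp only [Matrix.mul_assoc]
          _ = _ := by rw [hU, Matrix.mul_one]; simp only [Matrix.mul_assoc]
      rw [e2, Matrix.trace_mul_comm, Matrix.mul_assoc, hV, Matrix.mul_one]
      have e3 : G * (ρ - γ)
          = W * (Matrix.diagonal s * Matrix.diagonal (fun i => (d i : ℂ)) * Wᴴ) := by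
        calc _ = W * Matrix.diagonal s * (Wᴴ * W) * Matrix.diagonal (fun i => (d i : ℂ)) * Wᴴ := by
              rw [eW, hG]; simp only [Matrix.mul_assoc]
          _ = _ := by rw [hW', Matrix.mul_one]; simp only [Matrix.mul_assoc]
      rw [e3, Matrix.trace_mul_comm, Matrix.mul_assoc, hW', Matrix.mul_one,
        Matrix.diagonal_mul_diagonal, Matrix.trace_diagonal]
      push_cast
      refine Finset.sum_congr rfl fun i _ => ?_
      simp only [hs]
      split_ifs with h0
      · rw [abs_of_nonneg h0]; simp
      · rw [abs_of_neg (not_le.1 h0)]; simp)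
  have t1 : (Matrix.trace (ρ * matLog ρ)).re = ∑ i, p i * Real.log (p i) := by
    rw [lU, eU, aux_tr, hU', Complex.ofReal_re]
    refine Finset.sum_congr rfl fun i _ => ?_
    rw [Finset.sum_eq_single i]
    · simp
    · intro j _ hj
      simp [Matrix.one_apply_ne hj.symm]
    · simp
  have t2 : (Matrix.trace (ρ * matLog γ)).re
      = ∑ i, ∑ j, ‖(Uᴴ * V) i j‖ ^ 2 * (p i * Real.log (q j)) := by
    rw [lV, eU, aux_tr, Complex.ofReal_re]
  rw [t1, t2]
  exact key

theorem concavity_lower_bound_pinsker (n : ℕ) (hn : 1 ≤ n) (x : ℝ) (hx : x ∈ Set.Ioo (0:ℝ) 1)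
    (ρ₁ ρ₂ : Matrix (Fin n) (Fin n) ℂ) (h1 : IsDensity ρ₁) (h2 : IsDensity ρ₂) :
    vnEntropy (x • ρ₁ + (1 - x) • ρ₂) - x * vnEntropy ρ₁ - (1 - x) * vnEntropy ρ₂
      ≥ (1 / 2) * x * (1 - x) * traceNorm (ρ₁ - ρ₂) ^ 2 := by
  have hx0 := hx.1
  have hx1 : 0 < 1 - x := by linarith [hx.2]
  set γ := x • ρ₁ + (1 - x) • ρ₂ with hγ
  have q1 : (x • ρ₁).PosSemidef := h1.1.smul hx0.le
  have q2 : ((1 - x) • ρ₂).PosSemidef := h2.1.smul hx1.le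
  have hd : IsDensity γ := by
    refine ⟨q1.add q2, ?_⟩
    rw [hγ, Matrix.trace_add, Matrix.trace_smul, Matrix.trace_smul, h1.2, h2.2, ← add_smul]
    simp
  have hΔ := h1.1.isHermitian.sub h2.1.isHermitian
  have k1 := aux_pinsker ρ₁ γ h1 hd x hx0 (by rw [hγ, add_sub_cancel_left]; exact q2)
    (ρ₁ - ρ₂) hΔ (1 - x) (by rw [hγ]; module)
  have k2 := aux_pinsker ρ₂ γ h2 hd (1 - x) hx1 (by rw [hγ, add_sub_cancel_right]; exact q1)
    (ρ₁ - ρ₂) hΔ (-x) (by rw [hγ]; module)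
  have e : (Matrix.trace (γ * matLog γ)).re = x * (Matrix.trace (ρ₁ * matLog γ)).re
      + (1 - x) * (Matrix.trace (ρ₂ * matLog γ)).re := by
    conv_lhs => rw [show γ * matLog γ = x • (ρ₁ * matLog γ) + (1 - x) • (ρ₂ * matLog γ) by
      rw [← Matrix.smul_mul, ← Matrix.smul_mul, ← Matrix.add_mul]]
    rw [Matrix.trace_add, Matrix.trace_smul, Matrix.trace_smul, Complex.add_re,
      Complex.smul_re, Complex.smul_re, smul_eq_mul, smul_eq_mul]
  simp only [vnEntropy]
  rw [e]
  have m1 := mul_le_mul_of_nonneg_left k1 hx0.le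
  have m2 := mul_le_mul_of_nonneg_left k2 hx1.le
  have m3 : (1 / 2) * x * (1 - x) * traceNorm (ρ₁ - ρ₂) ^ 2
    = (x * ((1 - x) ^ 2 * traceNorm (ρ₁ - ρ₂) ^ 2)
      + (1 - x) * ((-x) ^ 2 * traceNorm (ρ₁ - ρ₂) ^ 2)) / 2 := by ring
  rw [m3]
  linarith
end

section
/- Let n ≥ 1, let x ∈ (0,1), and let ρ₁, ρ₂ be density matrices (n×n complex positive semidefinite matrices of trace 1), and set ρ_Av := x·ρ₁ + (1−x)·ρ₂. Then S(ρ_Av) − x·S(ρ₁) − (1−x)·S(ρ₂) ≥ −2·log( Tr[ (x·√ρ₁ + (1−x)·√ρ₂) · √ρ_Av ] ). -/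
open Matrix ComplexOrder

noncomputable def wgt {m : Type*} [Fintype m] [DecidableEq m] {A B : Matrix m m ℂ}
    (hA : A.IsHermitian) (hB : B.IsHermitian) (i j : m) : ℝ :=
  Complex.normSq ((star (hA.eigenvectorUnitary : Matrix m m ℂ) *
    (hB.eigenvectorUnitary : Matrix m m ℂ)) i j)

theorem trace_mfun {m : Type*} [Fintype m] [DecidableEq m] {A B : Matrix m m ℂ}
    (hA : A.IsHermitian) (hB : B.IsHermitian) (f g : ℝ → ℝ) :
    (Matrix.trace (mfun f A * mfun g B)).re =
      ∑ i, ∑ j, f (hA.eigenvalues i) * g (hB.eigenvalues j) * wgt hA hB i j := by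
  have e : Matrix.trace (mfun f A * mfun g B) = Matrix.trace
      (diagonal (fun i => (f (hA.eigenvalues i) : ℂ)) *
        ((star (hA.eigenvectorUnitary : Matrix m m ℂ) * (hB.eigenvectorUnitary : Matrix m m ℂ)) *
        (diagonal (fun i => (g (hB.eigenvalues i) : ℂ)) *
        star (star (hA.eigenvectorUnitary : Matrix m m ℂ) *
          (hB.eigenvectorUnitary : Matrix m m ℂ))))) := by
    rw [mfun, mfun, dif_pos hA, dif_pos hB]
    simp only [IsHermitian.cfc, Unitary.conjStarAlgAut_apply, star_mul, star_star]
    simp only [Matrix.mul_assoc]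
    rw [Matrix.trace_mul_comm]
    simp only [Matrix.mul_assoc]
    rfl
  rw [e]
  simp only [Matrix.trace, Matrix.diag, Matrix.diagonal_mul, Complex.re_sum, wgt]
  refine Finset.sum_congr rfl fun i _ => ?_
  generalize star (hA.eigenvectorUnitary : Matrix m m ℂ) *
          (hB.eigenvectorUnitary : Matrix m m ℂ) = W
  rw [Matrix.mul_apply, Finset.mul_sum, Complex.re_sum]
  refine Finset.sum_congr rfl fun j _ => ?_
  rw [Matrix.diagonal_mul, Matrix.star_apply]
  simp [Complex.normSq_apply]
  ring

theorem mfun_mul {m : Type*} [Fintype m] [DecidableEq m] {A : Matrix m m ℂ}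
    (hA : A.IsHermitian) (f g : ℝ → ℝ) :
    mfun f A * mfun g A = mfun (fun u => f u * g u) A := by
  simp only [mfun, dif_pos hA, IsHermitian.cfc, ← map_mul, diagonal_mul_diagonal]
  congr 2
  ext i
  simp

theorem mfun_id {m : Type*} [Fintype m] [DecidableEq m] {A : Matrix m m ℂ}
    (hA : A.IsHermitian) : mfun (fun u => u) A = A := by
  rw [mfun, dif_pos hA]
  conv_rhs => rw [hA.spectral_theorem]
  rfl

theorem mfun_one {m : Type*} [Fintype m] [DecidableEq m] {A : Matrix m m ℂ}
    (hA : A.IsHermitian) : mfun (fun _ => 1) A = 1 := by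
  rw [mfun, dif_pos hA, IsHermitian.cfc]
  have : (diagonal (RCLike.ofReal ∘ (fun _ : ℝ => (1 : ℝ)) ∘ hA.eigenvalues) : Matrix m m ℂ)
      = 1 := by
    ext i j
    simp [Matrix.diagonal_apply, Matrix.one_apply]
  rw [this, map_one]

theorem scalar_ineq (p q w c : ℝ) (hp : 0 ≤ p) (hq : 0 ≤ q) (hw : 0 ≤ w) (hc : 0 < c)
    (h : q = 0 → p * w = 0) :
    p * Real.log p * 1 * w - p * Real.log q * w ≥
      -2 * (√p * √q * w / c - p * 1 * w + p * 1 * w * Real.log c) := by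
  rcases hw.eq_or_lt with rfl | hw
  · simp
  rcases hp.eq_or_lt with rfl | hp
  · simp
  have hq : 0 < q := lt_of_le_of_ne hq fun h0 => (mul_pos hp hw).ne' (h h0.symm)
  have hsp := Real.sqrt_pos.2 hp
  have hsq := Real.sqrt_pos.2 hq
  have key := Real.log_le_sub_one_of_pos (x := √q / (√p * c)) (by positivity)
  rw [Real.log_div hsq.ne' (by positivity), Real.log_mul hsp.ne' hc.ne',
    Real.log_sqrt hq.le, Real.log_sqrt hp.le] at key
  have k2 := mul_le_mul_of_nonneg_left key (mul_pos hp hw).le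
  have e : p * w * (√q / (√p * c) - 1) = √p * √q * w / c - p * w := by
    have h2 : √p * √p = p := Real.mul_self_sqrt hp.le
    generalize √p = s at *
    subst h2
    field_simp
  rw [e] at k2
  linarith

theorem wgt_nonneg {m : Type*} [Fintype m] [DecidableEq m] {A B : Matrix m m ℂ}
    (hA : A.IsHermitian) (hB : B.IsHermitian) (i j : m) : 0 ≤ wgt hA hB i j :=
  Complex.normSq_nonneg _

theorem rel_ineq {m : Type*} [Fintype m] [DecidableEq m] {A B : Matrix m m ℂ}
    (hA : IsDensity A) (hB : B.PosSemidef)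
    (h0 : (Matrix.trace (A * mfun (fun u => if u = 0 then 1 else 0) B)).re = 0)
    (c : ℝ) (hc : 0 < c) :
    -vnEntropy A - (Matrix.trace (A * matLog B)).re ≥
      -2 * ((Matrix.trace (matSqrt A * matSqrt B)).re / c - 1 + Real.log c) := by
  obtain ⟨hA, hA1⟩ := hA
  have hAh := hA.isHermitian
  have hBh := hB.isHermitian
  have e1 : -vnEntropy A = ∑ i, ∑ j, hAh.eigenvalues i * Real.log (hAh.eigenvalues i) * 1 *
      wgt hAh hBh i j := by
    rw [← trace_mfun hAh hBh (fun u => u * Real.log u) (fun _ => 1), mfun_one hBh, mul_one,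
      ← mfun_mul hAh, mfun_id hAh, vnEntropy, neg_neg, matLog]
  have e2 : (Matrix.trace (A * matLog B)).re = ∑ i, ∑ j, hAh.eigenvalues i *
      Real.log (hBh.eigenvalues j) * wgt hAh hBh i j := by
    rw [← trace_mfun hAh hBh (fun u => u) Real.log, mfun_id hAh, matLog]
  have e3 : (1 : ℝ) = ∑ i, ∑ j, hAh.eigenvalues i * 1 * wgt hAh hBh i j := by
    rw [← trace_mfun hAh hBh (fun u => u) (fun _ => 1), mfun_id hAh, mfun_one hBh, mul_one, hA1]
    simp
  have e4 : (Matrix.trace (matSqrt A * matSqrt B)).re = ∑ i, ∑ j, √(hAh.eigenvalues i) *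
      √(hBh.eigenvalues j) * wgt hAh hBh i j := trace_mfun hAh hBh _ _
  have hs : ∀ i j, hBh.eigenvalues j = 0 → hAh.eigenvalues i * wgt hAh hBh i j = 0 := by
    intro i j hj
    have := trace_mfun hAh hBh (fun u => u) (fun u => if u = 0 then 1 else 0)
    rw [mfun_id hAh, h0] at this
    have nn : ∀ i j, 0 ≤ hAh.eigenvalues i * (if hBh.eigenvalues j = 0 then (1:ℝ) else 0) *
        wgt hAh hBh i j := fun i j => mul_nonneg (mul_nonneg (hA.eigenvalues_nonneg i)
          (by split_ifs <;> norm_num)) (wgt_nonneg ..)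
    have t1 := (Finset.sum_eq_zero_iff_of_nonneg
      (fun i _ => Finset.sum_nonneg fun j _ => nn i j)).1 this.symm i (Finset.mem_univ _)
    have t2 := (Finset.sum_eq_zero_iff_of_nonneg (fun j _ => nn i j)).1 t1 j (Finset.mem_univ _)
    simpa [hj] using t2
  have e5 : (Matrix.trace (matSqrt A * matSqrt B)).re / c - 1 + Real.log c =
      (Matrix.trace (matSqrt A * matSqrt B)).re / c - 1 + 1 * Real.log c := by ring
  rw [e5, e3, e1, e2, e4]
  simp only [Finset.sum_div, Finset.sum_mul, ← Finset.sum_sub_distrib, ← Finset.sum_add_distrib,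
    Finset.mul_sum]
  exact Finset.sum_le_sum fun i _ => Finset.sum_le_sum fun j _ =>
    scalar_ineq _ _ _ c (hA.eigenvalues_nonneg i) (hB.eigenvalues_nonneg j) (wgt_nonneg ..) hc
      (hs i j)

theorem tr_nonneg {m : Type*} [Fintype m] [DecidableEq m] {A B : Matrix m m ℂ}
    (hA : A.PosSemidef) (hB : B.PosSemidef) (f g : ℝ → ℝ) (hf : ∀ u, 0 ≤ u → 0 ≤ f u)
    (hg : ∀ u, 0 ≤ u → 0 ≤ g u) :
    0 ≤ (Matrix.trace (mfun f A * mfun g B)).re := by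
  rw [trace_mfun hA.isHermitian hB.isHermitian]
  exact Finset.sum_nonneg fun i _ => Finset.sum_nonneg fun j _ => mul_nonneg
    (mul_nonneg (hf _ (hA.eigenvalues_nonneg i)) (hg _ (hB.eigenvalues_nonneg j)))
    (wgt_nonneg ..)

theorem concavity_lower_bound_sqrt (n : ℕ) (hn : 1 ≤ n) (x : ℝ) (hx : x ∈ Set.Ioo (0:ℝ) 1)
    (ρ₁ ρ₂ : Matrix (Fin n) (Fin n) ℂ) (h1 : IsDensity ρ₁) (h2 : IsDensity ρ₂) :
    vnEntropy (x • ρ₁ + (1 - x) • ρ₂) - x * vnEntropy ρ₁ - (1 - x) * vnEntropy ρ₂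
      ≥ -2 * Real.log
          (Matrix.trace ((x • matSqrt ρ₁ + (1 - x) • matSqrt ρ₂)
            * matSqrt (x • ρ₁ + (1 - x) • ρ₂))).re := by
  obtain ⟨hx0, hx1⟩ := hx
  have hy0 : 0 < 1 - x := by linarith
  have lin : ∀ P Q R : Matrix (Fin n) (Fin n) ℂ, (Matrix.trace ((x • P + (1 - x) • Q) * R)).re =
      x * (Matrix.trace (P * R)).re + (1 - x) * (Matrix.trace (Q * R)).re := by
    intro P Q R
    rw [Matrix.add_mul, Matrix.smul_mul, Matrix.smul_mul, Matrix.trace_add, Matrix.trace_smul,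
      Matrix.trace_smul, Complex.add_re, Complex.smul_re, Complex.smul_re, smul_eq_mul,
      smul_eq_mul]
  have hσ : (x • ρ₁ + (1 - x) • ρ₂).PosSemidef :=
    (h1.1.smul hx0.le).add (h2.1.smul hy0.le)
  have hS : vnEntropy (x • ρ₁ + (1 - x) • ρ₂) =
      -(x * (Matrix.trace (ρ₁ * matLog (x • ρ₁ + (1 - x) • ρ₂))).re +
        (1 - x) * (Matrix.trace (ρ₂ * matLog (x • ρ₁ + (1 - x) • ρ₂))).re) := by
    rw [← lin, vnEntropy]
  have hP := lin ρ₁ ρ₂ (mfun (fun u => if u = 0 then 1 else 0) (x • ρ₁ + (1 - x) • ρ₂))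
  rw [hS, lin]
  generalize x • ρ₁ + (1 - x) • ρ₂ = σ at *
  have hz : (Matrix.trace (σ * mfun (fun u => if u = 0 then 1 else 0) σ)).re = 0 := by
    have := trace_mfun hσ.isHermitian hσ.isHermitian
      (fun u => u * if u = 0 then 1 else 0) (fun _ => 1)
    rw [← mfun_mul hσ.isHermitian, mfun_id hσ.isHermitian, mfun_one hσ.isHermitian,
      mul_one] at this
    rw [this]
    refine Finset.sum_eq_zero fun i _ => Finset.sum_eq_zero fun j _ => ?_
    split_ifs with h
    · rw [h]; simp
    · simp
  rw [hz] at hP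
  have n1 := tr_nonneg h1.1 hσ (fun u => u) (fun u => if u = 0 then 1 else 0) (fun _ h => h)
    (fun u _ => by split_ifs <;> norm_num)
  have n2 := tr_nonneg h2.1 hσ (fun u => u) (fun u => if u = 0 then 1 else 0) (fun _ h => h)
    (fun u _ => by split_ifs <;> norm_num)
  rw [mfun_id h1.1.isHermitian] at n1
  rw [mfun_id h2.1.isHermitian] at n2
  have m1 := mul_nonneg hx0.le n1
  have m2 := mul_nonneg hy0.le n2
  have z1 := (mul_eq_zero.1 (by linarith : x * (Matrix.trace (ρ₁ *
    mfun (fun u => if u = 0 then 1 else 0) σ)).re = 0)).resolve_left hx0.ne'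
  have z2 := (mul_eq_zero.1 (by linarith : (1 - x) * (Matrix.trace (ρ₂ *
    mfun (fun u => if u = 0 then 1 else 0) σ)).re = 0)).resolve_left hy0.ne'
  have k1 := rel_ineq h1 hσ z1
  have k2 := rel_ineq h2 hσ z2
  have a0 : 0 ≤ (Matrix.trace (matSqrt ρ₁ * matSqrt σ)).re :=
    tr_nonneg h1.1 hσ _ _ (fun _ _ => Real.sqrt_nonneg _) (fun _ _ => Real.sqrt_nonneg _)
  have b0 : 0 ≤ (Matrix.trace (matSqrt ρ₂ * matSqrt σ)).re :=
    tr_nonneg h2.1 hσ _ _ (fun _ _ => Real.sqrt_nonneg _) (fun _ _ => Real.sqrt_nonneg _)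
  generalize (Matrix.trace (matSqrt ρ₁ * matSqrt σ)).re = a at *
  generalize (Matrix.trace (matSqrt ρ₂ * matSqrt σ)).re = b at *
  obtain ⟨T, hT⟩ : ∃ T, T = x * a + (1 - x) * b := ⟨_, rfl⟩
  rw [← hT]
  have T0 : 0 ≤ T := by rw [hT]; positivity
  have main : ∀ c : ℝ, 0 < c →
      -(x * (Matrix.trace (ρ₁ * matLog σ)).re + (1 - x) * (Matrix.trace (ρ₂ * matLog σ)).re)
        - x * vnEntropy ρ₁ - (1 - x) * vnEntropy ρ₂ ≥ -2 * (T / c - 1 + Real.log c) := by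
    intro c hc
    have u1 := mul_le_mul_of_nonneg_left (k1 c hc) hx0.le
    have u2 := mul_le_mul_of_nonneg_left (k2 c hc) hy0.le
    have : T / c = x * (a / c) + (1 - x) * (b / c) := by rw [hT]; ring
    rw [this]
    linarith
  rcases T0.eq_or_lt with hT0 | hT0
  · have := main 1 one_pos
    rw [← hT0] at this ⊢
    simp at this ⊢
    linarith
  · have := main T hT0
    rw [div_self hT0.ne'] at this
    linarith
end

section
/- Let n ≥ 1, let x ∈ [0,1], and let A, B be n×n complex positive semidefinite matrices. Then x·√A + (1−x)·√B ≤ √(x·A + (1−x)·B) in the Loewner (positive semidefinite) order; that is, √(x·A + (1−x)·B) − (x·√A + (1−x)·√B) is positive semidefinite. -/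
open Matrix ComplexOrder

section aux
open scoped MatrixOrder Matrix.Norms.L2Operator

theorem matSqrt_eq_aux {n : ℕ} (A : Matrix (Fin n) (Fin n) ℂ) (hA : A.PosSemidef) :
    matSqrt A = CFC.sqrt A := by
  rw [CFC.sqrt_eq_real_sqrt A hA.nonneg, cfcₙ_eq_cfc, hA.isHermitian.cfc_eq]
  simp [matSqrt, mfun, hA.isHermitian]

theorem sqrt_concave_aux {n : ℕ} (x : ℝ) (hx : x ∈ Set.Icc (0:ℝ) 1)
    (A B : Matrix (Fin n) (Fin n) ℂ) (hA : A.PosSemidef) (hB : B.PosSemidef) :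
    x • CFC.sqrt A + (1 - x) • CFC.sqrt B ≤ CFC.sqrt (x • A + (1 - x) • B) :=
  CFC.concaveOn_sqrt.2 (Set.mem_Ici.2 hA.nonneg) (Set.mem_Ici.2 hB.nonneg) hx.1
    (sub_nonneg.2 hx.2) (by ring)

theorem sqrt_concave_aux' {n : ℕ} (x : ℝ) (hx : x ∈ Set.Icc (0:ℝ) 1)
    (A B : Matrix (Fin n) (Fin n) ℂ) (hA : A.PosSemidef) (hB : B.PosSemidef) :
    (matSqrt (x • A + (1 - x) • B) - (x • matSqrt A + (1 - x) • matSqrt B)).PosSemidef := by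
  rw [matSqrt_eq_aux A hA, matSqrt_eq_aux B hB, matSqrt_eq_aux _
    ((hA.smul hx.1).add (hB.smul (sub_nonneg.2 hx.2)))]
  exact Matrix.le_iff.1 (sqrt_concave_aux x hx A B hA hB)

end aux

theorem sqrt_concave_loewner (n : ℕ) (hn : 1 ≤ n) (x : ℝ) (hx : x ∈ Set.Icc (0:ℝ) 1)
    (A B : Matrix (Fin n) (Fin n) ℂ) (hA : A.PosSemidef) (hB : B.PosSemidef) :
    (matSqrt (x • A + (1 - x) • B) - (x • matSqrt A + (1 - x) • matSqrt B)).PosSemidef := by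
  exact sqrt_concave_aux' x hx A B hA hB
end

section
/- Let n ≥ 1, let x ∈ (0,1), and let ρ₁, ρ₂ be density matrices (n×n complex positive semidefinite matrices of trace 1), and set ρ_Av := x·ρ₁ + (1−x)·ρ₂. Then Tr[ (x·√ρ₁ + (1−x)·√ρ₂) · √ρ_Av ] ≤ 1; consequently −2·log( Tr[ (x·√ρ₁ + (1−x)·√ρ₂) · √ρ_Av ] ) ≥ 0. -/
open Matrix ComplexOrder

lemma matSqrt_herm {n : ℕ} (A : Matrix (Fin n) (Fin n) ℂ) (hA : A.PosSemidef) :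
    (matSqrt A).IsHermitian := by
  unfold matSqrt mfun
  rw [dif_pos hA.1, ← hA.1.cfc_eq]
  exact cfc_predicate _ _

lemma matSqrt_mul_self {n : ℕ} (A : Matrix (Fin n) (Fin n) ℂ) (hA : A.PosSemidef) :
    matSqrt A * matSqrt A = A := by
  unfold matSqrt mfun
  rw [dif_pos hA.1]
  conv_rhs => rw [hA.1.spectral_theorem]
  unfold Matrix.IsHermitian.cfc
  rw [← map_mul, Matrix.diagonal_mul_diagonal]
  congr 2
  funext i
  simp only [Function.comp]
  have := Real.mul_self_sqrt (hA.eigenvalues_nonneg i)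
  exact_mod_cast congrArg (fun r : ℝ => (r : ℂ)) this

lemma abs_trace_mul_le {n : ℕ} (A B : Matrix (Fin n) (Fin n) ℂ) (hA : A.IsHermitian)
    (hB : B.IsHermitian) :
    |(A * B).trace.re| ≤ ((A * A).trace.re + (B * B).trace.re) / 2 := by
  have h1 := (Complex.le_def.1 (Matrix.posSemidef_conjTranspose_mul_self (A + B)).trace_nonneg).1
  have h2 := (Complex.le_def.1 (Matrix.posSemidef_conjTranspose_mul_self (A - B)).trace_nonneg).1
  rw [(hA.add hB).eq] at h1
  rw [(hA.sub hB).eq] at h2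
  simp only [add_mul, mul_add, sub_mul, mul_sub, Matrix.trace_add, Matrix.trace_sub,
    Matrix.trace_mul_comm B A, Complex.add_re, Complex.sub_re, Complex.zero_re] at h1 h2
  rw [abs_le]
  constructor <;> linarith

theorem sqrt_trace_le_one (n : ℕ) (hn : 1 ≤ n) (x : ℝ) (hx : x ∈ Set.Ioo (0:ℝ) 1)
    (ρ₁ ρ₂ : Matrix (Fin n) (Fin n) ℂ) (h1 : IsDensity ρ₁) (h2 : IsDensity ρ₂) :
    (Matrix.trace ((x • matSqrt ρ₁ + (1 - x) • matSqrt ρ₂)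
        * matSqrt (x • ρ₁ + (1 - x) • ρ₂))).re ≤ 1
    ∧ -2 * Real.log
        (Matrix.trace ((x • matSqrt ρ₁ + (1 - x) • matSqrt ρ₂)
          * matSqrt (x • ρ₁ + (1 - x) • ρ₂))).re ≥ 0 := by
  obtain ⟨p1, t1⟩ := h1
  obtain ⟨p2, t2⟩ := h2
  obtain ⟨hx0, hx1⟩ := hx
  have p : (x • ρ₁ + (1 - x) • ρ₂).PosSemidef :=
    (p1.smul hx0.le).add (p2.smul (sub_nonneg.2 hx1.le))
  have t : (x • ρ₁ + (1 - x) • ρ₂).trace = 1 := by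
    rw [Matrix.trace_add, Matrix.trace_smul, Matrix.trace_smul, t1, t2, ← add_smul]
    simp
  have a1 := abs_trace_mul_le _ _ (matSqrt_herm _ p1) (matSqrt_herm _ p)
  have a2 := abs_trace_mul_le _ _ (matSqrt_herm _ p2) (matSqrt_herm _ p)
  rw [matSqrt_mul_self _ p1, matSqrt_mul_self _ p, t1, t] at a1
  rw [matSqrt_mul_self _ p2, matSqrt_mul_self _ p, t2, t] at a2
  generalize matSqrt (x • ρ₁ + (1 - x) • ρ₂) = S at *
  have e : (Matrix.trace ((x • matSqrt ρ₁ + (1 - x) • matSqrt ρ₂) * S)).re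
      = x * (matSqrt ρ₁ * S).trace.re + (1 - x) * (matSqrt ρ₂ * S).trace.re := by
    rw [add_mul, Matrix.trace_add, smul_mul_assoc, smul_mul_assoc, Matrix.trace_smul,
      Matrix.trace_smul, Complex.add_re, Complex.smul_re, Complex.smul_re, smul_eq_mul,
      smul_eq_mul]
  rw [e]
  rw [Complex.one_re, abs_le] at a1 a2
  generalize (matSqrt ρ₁ * S).trace.re = u at *
  generalize (matSqrt ρ₂ * S).trace.re = v at *
  have b1 : x * u + (1 - x) * v ≤ 1 := by nlinarith
  have b2 : -1 ≤ x * u + (1 - x) * v := by nlinarith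
  refine ⟨b1, ?_⟩
  have : Real.log (x * u + (1 - x) * v) ≤ 0 := by
    rw [← Real.log_abs]
    exact Real.log_nonpos (abs_nonneg _) (abs_le.2 ⟨b2, b1⟩)
  linarith
end

section
/- Let n ≥ 1, let x ∈ (0,1), and let ρ₁, ρ₂ be density matrices (n×n complex positive semidefinite matrices of trace 1), and set ρ_Av := x·ρ₁ + (1−x)·ρ₂. Then S(ρ_Av) − x·S(ρ₁) − (1−x)·S(ρ₂) ≥ 2·x²·(1−x)²·‖ρ₁ − ρ₂‖₁². -/
open Matrix ComplexOrder

lemma wp_log_ge {u : ℝ} (hu : 0 < u) :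
    (u - 1) * (5 * u + 1) / (2 * u * (u + 2)) ≤ Real.log u := by
  set g : ℝ → ℝ := fun u => Real.log u - (u - 1) * (5 * u + 1) / (2 * u * (u + 2)) with hg
  have hd : ∀ v : ℝ, 0 < v → HasDerivAt g ((v - 1) ^ 3 / (v ^ 2 * (v + 2) ^ 2)) v := by
    intro v hv
    have h1 : HasDerivAt (fun u : ℝ => (u - 1) * (5 * u + 1))
        (1 * (5 * v + 1) + (v - 1) * (5 * 1)) v :=
      ((hasDerivAt_id v).sub_const 1).mul (((hasDerivAt_id v).const_mul 5).add_const 1)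
    have h2 : HasDerivAt (fun u : ℝ => 2 * u * (u + 2))
        (2 * 1 * (v + 2) + 2 * v * 1) v :=
      ((hasDerivAt_id v).const_mul 2).mul ((hasDerivAt_id v).add_const 2)
    have h3 := (Real.hasDerivAt_log hv.ne').sub (h1.div h2 (by positivity))
    refine h3.congr_deriv ?_
    field_simp
    ring
  have hg1 : g 1 = 0 := by simp [hg]
  suffices h : 0 ≤ g u by simp only [hg] at h; linarith
  rcases le_total 1 u with h | h
  · have hm : MonotoneOn g (Set.Ici 1) := by
      apply monotoneOn_of_deriv_nonneg (convex_Ici 1)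
      · intro y hy
        exact (hd y (by have : (1:ℝ) ≤ y := hy; linarith)).continuousAt.continuousWithinAt
      · intro y hy
        rw [interior_Ici] at hy
        exact (hd y (by have : (1:ℝ) < y := hy; linarith)).differentiableAt.differentiableWithinAt
      · intro y hy
        rw [interior_Ici] at hy
        have hy' : (1:ℝ) < y := hy
        rw [(hd y (by linarith)).deriv]
        have : 0 ≤ y - 1 := by linarith
        positivity
    rw [← hg1]
    exact hm (Set.mem_Ici.2 le_rfl) h h
  · have hm : AntitoneOn g (Set.Icc u 1) := by
      apply antitoneOn_of_deriv_nonpos (convex_Icc u 1)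
      · intro y hy
        exact (hd y (by linarith [hy.1])).continuousAt.continuousWithinAt
      · intro y hy
        rw [interior_Icc] at hy
        exact (hd y (by linarith [hy.1])).differentiableAt.differentiableWithinAt
      · intro y hy
        rw [interior_Icc] at hy
        rw [(hd y (by linarith [hy.1])).deriv]
        apply div_nonpos_of_nonpos_of_nonneg
        · have : y - 1 ≤ 0 := by linarith [hy.2]
          exact Odd.pow_nonpos (by decide) this
        · positivity
    rw [← hg1]
    exact hm ⟨le_rfl, h⟩ ⟨h, le_rfl⟩ h

lemma wp_scalar {p q : ℝ} (hp : 0 ≤ p) (hq : 0 < q) :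
    3 * (p - q) ^ 2 ≤ 2 * (p + 2 * q) * (p * Real.log p - p * Real.log q - p + q) := by
  rcases hp.eq_or_lt with rfl | hp
  · simp; nlinarith [sq_nonneg q]
  · have h := wp_log_ge (div_pos hp hq)
    rw [Real.log_div hp.ne' hq.ne'] at h
    have e : (p / q - 1) * (5 * (p / q) + 1) / (2 * (p / q) * (p / q + 2))
      = (p - q) * (5 * p + q) / (2 * p * (p + 2 * q)) := by field_simp
    rw [e, div_le_iff₀ (by positivity)] at h
    nlinarith [h]

section wp
variable {n : ℕ}

lemma wp_trace (U V : Matrix (Fin n) (Fin n) ℂ) (a b : Fin n → ℝ) :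
    trace (U * diagonal (fun i => (a i : ℂ)) * Uᴴ * (V * diagonal (fun i => (b i : ℂ)) * Vᴴ))
      = ((∑ i, ∑ j, a i * b j * Complex.normSq ((Uᴴ * V) i j) : ℝ) : ℂ) := by
  have : trace (U * diagonal (fun i => (a i : ℂ)) * Uᴴ * (V * diagonal (fun i => (b i : ℂ)) * Vᴴ))
      = trace ((diagonal (fun i => (a i : ℂ)) * (Uᴴ * V)) *
          (diagonal (fun i => (b i : ℂ)) * (Uᴴ * V)ᴴ)) := by
    rw [conjTranspose_mul, conjTranspose_conjTranspose]
    simp only [Matrix.mul_assoc]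
    rw [trace_mul_comm U]
    simp only [Matrix.mul_assoc]
  rw [this]
  simp only [trace, diag_apply]
  push_cast
  refine Finset.sum_congr rfl fun i _ => ?_
  rw [Matrix.mul_apply]
  refine Finset.sum_congr rfl fun j _ => ?_
  rw [diagonal_mul, diagonal_mul, conjTranspose_apply, Complex.normSq_eq_conj_mul_self]
  simp only [Complex.star_def]
  ring

lemma wp_row {M : Matrix (Fin n) (Fin n) ℂ} (h : M * Mᴴ = 1) (i : Fin n) :
    ∑ j, Complex.normSq (M i j) = 1 := by
  have := congrFun (congrFun h i) i
  rw [Matrix.mul_apply, one_apply_eq] at this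
  have h2 : ((∑ j, Complex.normSq (M i j) : ℝ) : ℂ) = 1 := by
    rw [← this]; push_cast
    refine Finset.sum_congr rfl fun j _ => ?_
    rw [conjTranspose_apply, Complex.star_def, Complex.mul_conj]
  exact_mod_cast h2

lemma wp_col {M : Matrix (Fin n) (Fin n) ℂ} (h : Mᴴ * M = 1) (j : Fin n) :
    ∑ i, Complex.normSq (M i j) = 1 := by
  have := wp_row (M := Mᴴ) (by simpa using h) j
  simpa [conjTranspose_apply] using this

lemma wp_pinsker (U V W : Matrix (Fin n) (Fin n) ℂ) (p q : Fin n → ℝ)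
    (hU : U * Uᴴ = 1) (hV : V * Vᴴ = 1) (hW : W * Wᴴ = 1)
    (hp : ∀ i, 0 ≤ p i) (hq : ∀ i, 0 ≤ q i) (sp : ∑ i, p i = 1) (sq : ∑ i, q i = 1)
    (ρ σ L K : Matrix (Fin n) (Fin n) ℂ)
    (hρ : ρ = U * diagonal (fun i => (p i : ℂ)) * Uᴴ)
    (hσ : σ = V * diagonal (fun i => (q i : ℂ)) * Vᴴ)
    (hL : L = V * diagonal (fun i => (Real.log (q i) : ℂ)) * Vᴴ)
    (hK : K = U * diagonal (fun i => (Real.log (p i) : ℂ)) * Uᴴ)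
    (hker : ∀ i j, q j = 0 → p i * Complex.normSq ((Uᴴ * V) i j) = 0) :
    ‖trace (W * (ρ - σ))‖ ^ 2 ≤ 2 * ((trace (ρ * K)).re - (trace (ρ * L)).re) := by
  have hU' : Uᴴ * U = 1 := mul_eq_one_comm.1 hU
  have hV' : Vᴴ * V = 1 := mul_eq_one_comm.1 hV
  have hW' : Wᴴ * W = 1 := mul_eq_one_comm.1 hW
  set M := Uᴴ * V with hM
  set N := Uᴴ * (Wᴴ * V) with hN
  have hM1 : M * Mᴴ = 1 := by
    rw [hM, conjTranspose_mul, conjTranspose_conjTranspose, Matrix.mul_assoc,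
      ← Matrix.mul_assoc V, hV, Matrix.one_mul, hU']
  have hN1 : N * Nᴴ = 1 := by
    rw [hN, conjTranspose_mul, conjTranspose_mul, conjTranspose_conjTranspose,
      conjTranspose_conjTranspose]
    calc Uᴴ * (Wᴴ * V) * (Vᴴ * W * U) = Uᴴ * (Wᴴ * (V * Vᴴ) * W) * U := by
          simp only [Matrix.mul_assoc]
      _ = 1 := by rw [hV, Matrix.mul_one, hW', Matrix.mul_one, hU']
  have hM2 : Mᴴ * M = 1 := mul_eq_one_comm.1 hM1
  have hN2 : Nᴴ * N = 1 := mul_eq_one_comm.1 hN1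
  have sumL : ∀ (X : Matrix (Fin n) (Fin n) ℂ), X * Xᴴ = 1 → ∀ a : Fin n → ℝ,
      ∑ i, ∑ j, a i * Complex.normSq (X i j) = ∑ i, a i := by
    intro X hX a
    simp only [← Finset.mul_sum, wp_row hX, mul_one]
  have sumR : ∀ (X : Matrix (Fin n) (Fin n) ℂ), Xᴴ * X = 1 → ∀ a : Fin n → ℝ,
      ∑ i, ∑ j, a j * Complex.normSq (X i j) = ∑ i, a i := by
    intro X hX a
    rw [Finset.sum_comm]
    simp only [← Finset.mul_sum, wp_col hX, mul_one]
  have e1 : (trace (ρ * K)).re = ∑ i, ∑ j, p i * Real.log (p i) * Complex.normSq (M i j) := by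
    have : ρ * K = U * diagonal (fun i => ((p i * Real.log (p i) : ℝ) : ℂ)) * Uᴴ
        * (V * diagonal (fun i => ((1 : ℝ) : ℂ)) * Vᴴ) := by
      have h1 : (diagonal (fun _ => ((1 : ℝ) : ℂ)) : Matrix (Fin n) (Fin n) ℂ) = 1 := by
        simp
      rw [h1, Matrix.mul_one, hV, Matrix.mul_one, hρ, hK]
      calc _ = U * (diagonal (fun i => (p i : ℂ)) * (Uᴴ * U)
            * diagonal (fun i => (Real.log (p i) : ℂ))) * Uᴴ := by simp only [Matrix.mul_assoc]
        _ = _ := by rw [hU', Matrix.mul_one, diagonal_mul_diagonal]; push_cast; rfl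
    rw [this, wp_trace, Complex.ofReal_re]
    simp [hM]
  have e2 : (trace (ρ * L)).re = ∑ i, ∑ j, p i * Real.log (q j) * Complex.normSq (M i j) := by
    rw [hρ, hL, wp_trace, Complex.ofReal_re]
  have e3 : trace (W * (ρ - σ)) = ∑ i, ∑ j, star (N i j) * ((p i : ℂ) - q j) * M i j := by
    have t1 : trace (W * ρ) = trace (Nᴴ * (diagonal (fun i => (p i : ℂ)) * M)) := by
      rw [hN, hM, hρ, conjTranspose_mul, conjTranspose_mul, conjTranspose_conjTranspose,
        conjTranspose_conjTranspose]
      simp only [Matrix.mul_assoc]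
      rw [trace_mul_comm Vᴴ]
      simp only [Matrix.mul_assoc]
      rw [hV, Matrix.mul_one]
    have t2 : trace (W * σ) = trace (Nᴴ * (M * diagonal (fun i => (q i : ℂ)))) := by
      rw [hN, hM, hσ, conjTranspose_mul, conjTranspose_mul, conjTranspose_conjTranspose,
        conjTranspose_conjTranspose]
      simp only [Matrix.mul_assoc]
      rw [trace_mul_comm Vᴴ]
      simp only [Matrix.mul_assoc]
      rw [← Matrix.mul_assoc U, hU, Matrix.one_mul]
    rw [Matrix.mul_sub, trace_sub, t1, t2, ← trace_sub, ← Matrix.mul_sub, Finset.sum_comm]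
    simp only [trace, diag_apply]
    refine Finset.sum_congr rfl fun j _ => ?_
    rw [Matrix.mul_apply]
    refine Finset.sum_congr rfl fun i _ => ?_
    rw [conjTranspose_apply, Matrix.sub_apply, diagonal_mul, mul_diagonal]
    ring
  have key := Finset.sum_sq_le_sum_mul_sum_of_sq_le_mul (Finset.univ : Finset (Fin n × Fin n))
    (r := fun x => ‖star (N x.1 x.2) * ((p x.1 : ℂ) - q x.2) * M x.1 x.2‖)
    (f := fun x => 2 * (p x.1 * Real.log (p x.1) - p x.1 * Real.log (q x.2) - p x.1 + q x.2)
      * Complex.normSq (M x.1 x.2))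
    (g := fun x => (p x.1 + 2 * q x.2) / 3 * Complex.normSq (N x.1 x.2)) ?_ ?_ ?_
  · have eg : ∑ x : Fin n × Fin n, (p x.1 + 2 * q x.2) / 3 * Complex.normSq (N x.1 x.2) = 1 := by
      rw [Fintype.sum_prod_type]
      have a1 := sumL N hN1 p
      have a2 := sumR N hN2 q
      calc _ = (∑ i, ∑ j, p i * Complex.normSq (N i j)
            + 2 * ∑ i, ∑ j, q j * Complex.normSq (N i j)) / 3 := by
            simp only [Finset.mul_sum, ← Finset.sum_add_distrib, Finset.sum_div]
            refine Finset.sum_congr rfl fun i _ => Finset.sum_congr rfl fun j _ => ?_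
            ring
        _ = 1 := by rw [a1, a2, sp, sq]; norm_num
    have ef : ∑ x : Fin n × Fin n,
        2 * (p x.1 * Real.log (p x.1) - p x.1 * Real.log (q x.2) - p x.1 + q x.2)
          * Complex.normSq (M x.1 x.2) = 2 * ((trace (ρ * K)).re - (trace (ρ * L)).re) := by
      rw [Fintype.sum_prod_type, e1, e2]
      have a1 := sumL M hM1 p
      have a2 := sumR M hM2 q
      calc _ = 2 * ((∑ i, ∑ j, p i * Real.log (p i) * Complex.normSq (M i j))
            - (∑ i, ∑ j, p i * Real.log (q j) * Complex.normSq (M i j))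
            - (∑ i, ∑ j, p i * Complex.normSq (M i j))
            + ∑ i, ∑ j, q j * Complex.normSq (M i j)) := by
            simp only [Finset.mul_sum, ← Finset.sum_add_distrib, ← Finset.sum_sub_distrib]
            refine Finset.sum_congr rfl fun i _ => Finset.sum_congr rfl fun j _ => ?_
            ring
        _ = _ := by rw [a1, a2, sp, sq]; ring
    rw [eg, ef, mul_one] at key
    refine le_trans ?_ key
    rw [e3, ← Fintype.sum_prod_type']
    gcongr
    exact norm_sum_le _ _
  all_goals rintro ⟨i, j⟩ -
  · dsimp only
    rcases (hq j).eq_or_lt with h | h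
    · have hk := hker i j h.symm
      rw [← h]
      simp only [Real.log_zero]
      have : 2 * (p i * Real.log (p i) - p i * 0 - p i + 0) * Complex.normSq (M i j) =
        2 * (Real.log (p i) - 1) * (p i * Complex.normSq (M i j)) := by ring
      rw [this, hk, mul_zero]
    · have := wp_scalar (hp i) h
      have h3 : 0 ≤ p i * Real.log (p i) - p i * Real.log (q j) - p i + q j := by
        have h4 : 0 < 2 * (p i + 2 * q j) := by have := hp i; positivity
        exact nonneg_of_mul_nonneg_right (le_trans (by positivity) this) h4
      have := Complex.normSq_nonneg (M i j)
      positivity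
  · dsimp only
    have := hp i
    have := hq j
    have := Complex.normSq_nonneg (N i j)
    positivity
  · dsimp only
    have hn : ‖star (N i j) * ((p i : ℂ) - q j) * M i j‖ ^ 2
        = Complex.normSq (N i j) * (p i - q j) ^ 2 * Complex.normSq (M i j) := by
      rw [norm_mul, norm_mul, norm_star, ← Complex.ofReal_sub, Complex.norm_real, mul_pow,
        mul_pow, Complex.normSq_eq_norm_sq, Complex.normSq_eq_norm_sq, Real.norm_eq_abs, sq_abs]
    rw [hn]
    have n1 := Complex.normSq_nonneg (M i j)
    have n2 := Complex.normSq_nonneg (N i j)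
    rcases (hq j).eq_or_lt with h | h
    · have hk := hker i j h.symm
      rw [← h]
      simp only [Real.log_zero]
      have t1 : Complex.normSq (N i j) * (p i - 0) ^ 2 * Complex.normSq (M i j) =
        Complex.normSq (N i j) * p i * (p i * Complex.normSq (M i j)) := by ring
      have t2 : 2 * (p i * Real.log (p i) - p i * 0 - p i + 0) * Complex.normSq (M i j) =
        2 * (Real.log (p i) - 1) * (p i * Complex.normSq (M i j)) := by ring
      rw [t1, t2, hk]; simp
    · have h0 := wp_scalar (hp i) h
      have := mul_le_mul_of_nonneg_left h0 (mul_nonneg n1 n2)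
      nlinarith [this]

lemma wp_cfc {A : Matrix (Fin n) (Fin n) ℂ} (hA : A.IsHermitian) (f : ℝ → ℝ) :
    hA.cfc f = (hA.eigenvectorUnitary : Matrix (Fin n) (Fin n) ℂ) *
      diagonal (fun i => (f (hA.eigenvalues i) : ℂ)) *
      (hA.eigenvectorUnitary : Matrix (Fin n) (Fin n) ℂ)ᴴ := rfl

lemma wp_spec {A : Matrix (Fin n) (Fin n) ℂ} (hA : A.IsHermitian) :
    A = (hA.eigenvectorUnitary : Matrix (Fin n) (Fin n) ℂ) *
      diagonal (fun i => (hA.eigenvalues i : ℂ)) *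
      (hA.eigenvectorUnitary : Matrix (Fin n) (Fin n) ℂ)ᴴ := hA.spectral_theorem

lemma wp_unit {A : Matrix (Fin n) (Fin n) ℂ} (hA : A.IsHermitian) :
    (hA.eigenvectorUnitary : Matrix (Fin n) (Fin n) ℂ) *
      (hA.eigenvectorUnitary : Matrix (Fin n) (Fin n) ℂ)ᴴ = 1 :=
  Unitary.mul_star_self_of_mem hA.eigenvectorUnitary.2

lemma wp_sum {A : Matrix (Fin n) (Fin n) ℂ} (hA : A.IsHermitian) (h : trace A = 1) :
    ∑ i, hA.eigenvalues i = 1 := by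
  have := hA.trace_eq_sum_eigenvalues
  rw [h] at this
  have h2 : ((∑ i, hA.eigenvalues i : ℝ) : ℂ) = 1 := by rw [this]; push_cast; rfl
  exact_mod_cast h2

lemma wp_ker {U V ρ σ τ : Matrix (Fin n) (Fin n) ℂ} {p q : Fin n → ℝ} {x : ℝ} (hx : 0 < x)
    (hV : V * Vᴴ = 1) (hp : ∀ i, 0 ≤ p i)
    (hρ : ρ = U * diagonal (fun i => (p i : ℂ)) * Uᴴ)
    (hσ : σ = V * diagonal (fun i => (q i : ℂ)) * Vᴴ)
    (hτ : τ.PosSemidef) (he : σ = x • ρ + τ) (i j : Fin n) (hj : q j = 0) :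
    p i * Complex.normSq ((Uᴴ * V) i j) = 0 := by
  have hVV : Vᴴ * V = 1 := mul_eq_one_comm.1 hV
  -- (Vᴴ σ V) j j = 0
  have s0 : (Vᴴ * σ * V) j j = 0 := by
    have : Vᴴ * σ * V = diagonal (fun i => (q i : ℂ)) := by
      conv_lhs => rw [hσ]
      calc _ = (Vᴴ * V) * diagonal (fun i => (q i : ℂ)) * (Vᴴ * V) := by
            simp only [Matrix.mul_assoc]
        _ = _ := by rw [hVV, Matrix.one_mul, Matrix.mul_one]
    rw [this, diagonal_apply_eq, hj, Complex.ofReal_zero]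
  have s1 : (Vᴴ * ρ * V) j j
      = ((∑ i, p i * Complex.normSq ((Uᴴ * V) i j) : ℝ) : ℂ) := by
    have : Vᴴ * ρ * V = (Uᴴ * V)ᴴ * (diagonal (fun i => (p i : ℂ)) * (Uᴴ * V)) := by
      conv_lhs => rw [hρ]
      rw [conjTranspose_mul, conjTranspose_conjTranspose]
      simp only [Matrix.mul_assoc]
    rw [this, Matrix.mul_apply]
    push_cast
    refine Finset.sum_congr rfl fun i _ => ?_
    rw [diagonal_mul, conjTranspose_apply, Complex.normSq_eq_conj_mul_self]
    simp only [Complex.star_def]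
    ring
  have s2 : 0 ≤ (Vᴴ * τ * V) j j := (hτ.conjTranspose_mul_mul_same V).diag_nonneg
  have s3 : (Vᴴ * σ * V) j j = (x : ℂ) * (Vᴴ * ρ * V) j j + (Vᴴ * τ * V) j j := by
    rw [he, Matrix.mul_add, Matrix.add_mul, Matrix.add_apply, Matrix.mul_smul, Matrix.smul_mul,
      Matrix.smul_apply, Complex.real_smul]
  rw [s0, s1] at s3
  have s4 := (Complex.le_def.1 s2).1
  have s5 := congrArg Complex.re s3
  rw [Complex.add_re, Complex.re_ofReal_mul, Complex.ofReal_re] at s5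
  simp only [Complex.zero_re] at s4 s5
  have nn : ∀ i ∈ Finset.univ, 0 ≤ p i * Complex.normSq ((Uᴴ * V) i j) :=
    fun i _ => mul_nonneg (hp i) (Complex.normSq_nonneg _)
  have s6 := Finset.sum_nonneg nn
  have s7 : ∑ i, p i * Complex.normSq ((Uᴴ * V) i j) = 0 := by
    nlinarith [mul_nonneg hx.le s6]
  exact (Finset.sum_eq_zero_iff_of_nonneg nn).1 s7 i (Finset.mem_univ i)

lemma wp_mat {ρ σ τ W : Matrix (Fin n) (Fin n) ℂ} {x : ℝ} (hx : 0 < x)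
    (h1 : IsDensity ρ) (h2 : IsDensity σ) (hτ : τ.PosSemidef) (he : σ = x • ρ + τ)
    (hW : W * Wᴴ = 1) :
    ‖trace (W * (ρ - σ))‖ ^ 2
      ≤ 2 * ((trace (ρ * matLog ρ)).re - (trace (ρ * matLog σ)).re) := by
  have p1 := h1.1
  have p2 := h2.1
  have a1 : ρ.IsHermitian := p1.isHermitian
  have a2 : σ.IsHermitian := p2.isHermitian
  have k1 : matLog ρ = a1.cfc Real.log := by unfold matLog mfun; exact dif_pos a1
  have k2 : matLog σ = a2.cfc Real.log := by unfold matLog mfun; exact dif_pos a2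
  rw [wp_cfc] at k1 k2
  have n1 : ∀ i, 0 ≤ a1.eigenvalues i := p1.eigenvalues_nonneg
  have n2 : ∀ i, 0 ≤ a2.eigenvalues i := p2.eigenvalues_nonneg
  have s1 := wp_spec a1
  have s2 := wp_spec a2
  have u1 := wp_unit a1
  have u2 := wp_unit a2
  have m1 := wp_sum a1 h1.2
  have m2 := wp_sum a2 h2.2
  generalize a1.eigenvalues = p at *
  generalize a2.eigenvalues = q at *
  generalize (a1.eigenvectorUnitary : Matrix (Fin n) (Fin n) ℂ) = U at *
  generalize (a2.eigenvectorUnitary : Matrix (Fin n) (Fin n) ℂ) = V at *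
  exact wp_pinsker U V W p q u1 u2 hW n1 n2 m1 m2 ρ σ _ _ s1 s2 k2 k1
    (fun i j hj => wp_ker hx u2 n1 s1 s2 hτ he i j hj)

lemma wp_sign {A : Matrix (Fin n) (Fin n) ℂ} (hA : A.IsHermitian) :
    ∃ W : Matrix (Fin n) (Fin n) ℂ, W * Wᴴ = 1 ∧ trace (W * A) = (traceNorm A : ℂ) := by
  set E := (hA.eigenvectorUnitary : Matrix (Fin n) (Fin n) ℂ) with hE
  have hEE : Eᴴ * E = 1 := mul_eq_one_comm.1 (wp_unit _)
  set s : Fin n → ℂ := fun i => if 0 ≤ hA.eigenvalues i then 1 else -1 with hs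
  have hss : ∀ i, s i * star (s i) = 1 := by
    intro i; simp only [hs]; split_ifs <;> simp
  refine ⟨E * diagonal s * Eᴴ, ?_, ?_⟩
  · rw [conjTranspose_mul, conjTranspose_mul, conjTranspose_conjTranspose, diagonal_conjTranspose]
    calc _ = E * (diagonal s * (Eᴴ * E) * diagonal (star s)) * Eᴴ := by
          simp only [Matrix.mul_assoc]
      _ = 1 := by
          rw [hEE, Matrix.mul_one, diagonal_mul_diagonal]
          have : (fun i => s i * (star s) i) = fun _ => 1 := funext hss
          rw [this, diagonal_one, Matrix.mul_one]
          exact wp_unit hA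
  · have : trace (E * diagonal s * Eᴴ * A)
        = trace (diagonal s * diagonal (fun i => (hA.eigenvalues i : ℂ))) := by
      conv_lhs => rw [wp_spec hA]
      rw [← hE]
      calc _ = trace (E * (diagonal s * (Eᴴ * E)
            * diagonal (fun i => (hA.eigenvalues i : ℂ)) * Eᴴ)) := by simp only [Matrix.mul_assoc]
        _ = _ := by
          rw [trace_mul_comm, hEE, Matrix.mul_one, Matrix.mul_assoc, hEE, Matrix.mul_one]
    rw [this, diagonal_mul_diagonal, trace_diagonal, traceNorm, dif_pos hA]
    push_cast
    refine Finset.sum_congr rfl fun i _ => ?_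
    simp only [hs]
    split_ifs with h
    · rw [abs_of_nonneg h, one_mul]
    · rw [abs_of_neg (not_le.1 h)]; push_cast; ring

end wp

theorem concavity_lower_bound_weak_pinsker (n : ℕ) (hn : 1 ≤ n) (x : ℝ)
    (hx : x ∈ Set.Ioo (0:ℝ) 1)
    (ρ₁ ρ₂ : Matrix (Fin n) (Fin n) ℂ) (h1 : IsDensity ρ₁) (h2 : IsDensity ρ₂) :
    vnEntropy (x • ρ₁ + (1 - x) • ρ₂) - x * vnEntropy ρ₁ - (1 - x) * vnEntropy ρ₂
      ≥ 2 * x ^ 2 * (1 - x) ^ 2 * traceNorm (ρ₁ - ρ₂) ^ 2 := by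
  obtain ⟨hx0, hx1⟩ := hx
  have hy0 : 0 < 1 - x := by linarith
  have q1 : (x • ρ₁).PosSemidef := h1.1.smul hx0.le
  have q2 : ((1 - x) • ρ₂).PosSemidef := h2.1.smul hy0.le
  have hσ : IsDensity (x • ρ₁ + (1 - x) • ρ₂) := by
    refine ⟨q1.add q2, ?_⟩
    rw [trace_add, trace_smul, trace_smul, h1.2, h2.2, ← add_smul]
    simp
  have hΔ : (ρ₁ - ρ₂).IsHermitian := h1.1.1.sub h2.1.1
  obtain ⟨W, hW, hT⟩ := wp_sign hΔ
  have b1 := wp_mat hx0 h1 hσ q2 rfl hW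
  have b2 := wp_mat hy0 h2 hσ q1 (add_comm _ _) hW
  set σ := x • ρ₁ + (1 - x) • ρ₂ with hσd
  have d1 : ρ₁ - σ = (1 - x) • (ρ₁ - ρ₂) := by rw [hσd]; module
  have d2 : ρ₂ - σ = (-x) • (ρ₁ - ρ₂) := by rw [hσd]; module
  have l : (trace (σ * matLog σ)).re
      = x * (trace (ρ₁ * matLog σ)).re + (1 - x) * (trace (ρ₂ * matLog σ)).re := by
    have : trace (σ * matLog σ)
        = x • trace (ρ₁ * matLog σ) + (1 - x) • trace (ρ₂ * matLog σ) := by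
      rw [← trace_smul, ← trace_smul, ← trace_add, ← Matrix.smul_mul, ← Matrix.smul_mul,
        ← Matrix.add_mul]
    rw [this, Complex.add_re, Complex.smul_re, Complex.smul_re, smul_eq_mul, smul_eq_mul]
  rw [d1, Matrix.mul_smul, trace_smul, hT, norm_smul, Complex.norm_real, mul_pow,
    Real.norm_eq_abs, Real.norm_eq_abs, sq_abs, sq_abs] at b1
  rw [d2, Matrix.mul_smul, trace_smul, hT, norm_smul, Complex.norm_real, mul_pow,
    Real.norm_eq_abs, Real.norm_eq_abs, sq_abs, sq_abs] at b2
  simp only [vnEntropy]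
  rw [l]
  have c1 := mul_le_mul_of_nonneg_left b1 hx0.le
  have c2 := mul_le_mul_of_nonneg_left b2 hy0.le
  set t := traceNorm (ρ₁ - ρ₂)
  have c3 : 0 ≤ x * (1 - x) * t ^ 2 * (1 - 2 * x) ^ 2 := by positivity
  nlinarith [c1, c2, c3]
end

section
/- Let n ≥ 1, let x ∈ (0,1), and let ρ₁, ρ₂ be density matrices (n×n complex positive semidefinite matrices of trace 1), and set ρ_Av := x·ρ₁ + (1−x)·ρ₂. Then h(x)·(1/2)·‖ρ₁ − ρ₂‖₁ ≥ S(ρ_Av) − x·S(ρ₁) − (1−x)·S(ρ₂) ≥ (1/2)·x·(1−x)·‖ρ₁ − ρ₂‖₁², where h(x) = −x·log x − (1−x)·log(1−x) is the binary entropy. -/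
open Matrix ComplexOrder

open scoped MatrixOrder

lemma scal_deriv_mono : MonotoneOn (fun u : ℝ => Real.log u - (3/2) * ((u-1)*(u+5)/(u+2)^2)) (Set.Ioi 0) := by
  have hd : ∀ u ∈ Set.Ioi (0:ℝ), HasDerivAt (fun u : ℝ => Real.log u - (3/2) * ((u-1)*(u+5)/(u+2)^2))
      (u⁻¹ - 27/(u+2)^3) u := by
    intro u hu
    have hu : 0 < u := hu
    have h2 : (u+2)^2 ≠ 0 := by positivity
    have h := (Real.hasDerivAt_log hu.ne').sub
      ((((((hasDerivAt_id u).sub_const 1).mul ((hasDerivAt_id u).add_const 5)).div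
        (((hasDerivAt_id u).add_const 2).pow 2) h2)).const_mul (3/2))
    refine h.congr_deriv ?_
    simp
    field_simp
    ring
  refine monotoneOn_of_deriv_nonneg (convex_Ioi 0)
    (fun u hu => (hd u hu).continuousAt.continuousWithinAt)
    (fun u hu => (hd u (by simpa using hu)).differentiableAt.differentiableWithinAt) ?_
  intro u hu
  have hu : 0 < u := by simpa using hu
  rw [(hd u hu).deriv, sub_nonneg, div_le_iff₀ (by positivity), inv_mul_eq_div, le_div_iff₀ hu]
  nlinarith [mul_nonneg (sq_nonneg (u-1)) (by linarith : 0 ≤ u + 8)]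

lemma scal1 (u : ℝ) (hu : 0 < u) : 3*(u-1)^2/(2*(u+2)) ≤ u * Real.log u - u + 1 := by
  set F : ℝ → ℝ := fun u => u * Real.log u - u + 1 - 3*(u-1)^2/(2*(u+2)) with hF
  have hd : ∀ u ∈ Set.Ioi (0:ℝ), HasDerivAt F (Real.log u - (3/2) * ((u-1)*(u+5)/(u+2)^2)) u := by
    intro u hu
    have hu : 0 < u := hu
    have h2 : 2*(u+2) ≠ 0 := by positivity
    have h := ((((hasDerivAt_id u).mul (Real.hasDerivAt_log hu.ne')).sub (hasDerivAt_id u)).add_const 1).sub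
      (((((hasDerivAt_id u).sub_const 1).pow 2).const_mul 3).div
        (((hasDerivAt_id u).add_const 2).const_mul 2) h2)
    refine h.congr_deriv ?_
    simp
    field_simp
    ring
  have hconv : ConvexOn ℝ (Set.Ioi 0) F := by
    refine MonotoneOn.convexOn_of_deriv (convex_Ioi 0)
      (fun u hu => (hd u hu).continuousAt.continuousWithinAt)
      (fun u hu => (hd u (by simpa using hu)).differentiableAt.differentiableWithinAt) ?_
    rw [interior_Ioi]
    intro a ha b hb hab
    rw [(hd a ha).deriv, (hd b hb).deriv]
    exact scal_deriv_mono ha hb hab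
  have h1 := hd 1 (by simp)
  have hd1 : HasDerivAt F 0 1 := by simpa using h1
  have this : F 1 ≤ F u := by
    rcases lt_trichotomy u 1 with h | h | h
    · have := hconv.slope_le_of_hasDerivAt hu (by simp : (1:ℝ) ∈ Set.Ioi 0) h hd1
      rw [slope_def_field, div_le_iff₀ (by linarith)] at this
      linarith
    · rw [h]
    · have := hconv.le_slope_of_hasDerivAt (by simp : (1:ℝ) ∈ Set.Ioi 0) hu h hd1
      rw [slope_def_field, le_div_iff₀ (by linarith)] at this
      linarith
  simp [hF] at this
  linarith

lemma scal2 (a b : ℝ) (ha : 0 ≤ a) (hb : 0 < b) :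
    3*(a-b)^2/(2*(a+2*b)) ≤ a * Real.log a - a * Real.log b - a + b := by
  rcases ha.eq_or_lt with rfl | ha
  · simp
    rw [div_le_iff₀ (by positivity)]
    nlinarith [sq_nonneg b]
  · have h := scal1 (a/b) (by positivity)
    have h2 := mul_le_mul_of_nonneg_left h hb.le
    rw [Real.log_div ha.ne' hb.ne'] at h2
    have e1 : b * (3*(a/b-1)^2/(2*(a/b+2))) = 3*(a-b)^2/(2*(a+2*b)) := by
      field_simp
    have e2 : b * (a / b * (Real.log a - Real.log b) - a / b + 1) = a * Real.log a - a * Real.log b - a + b := by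
      field_simp
    rw [e1, e2] at h2
    exact h2

section mat
variable {m : Type*} [Fintype m] [DecidableEq m]

lemma diagdec {A : Matrix m m ℂ} (hA : A.IsHermitian) : ∃ U : Matrix m m ℂ, U * Uᴴ = 1 ∧ Uᴴ * U = 1 ∧
    ∀ f : ℝ → ℝ, cfc f A = U * diagonal (fun i => (f (hA.eigenvalues i) : ℂ)) * Uᴴ := by
  refine ⟨hA.eigenvectorUnitary, ?_, ?_, ?_⟩
  · exact Unitary.coe_mul_star_self hA.eigenvectorUnitary
  · exact Unitary.coe_star_mul_self hA.eigenvectorUnitary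
  · intro f
    rw [hA.cfc_eq]
    rfl

lemma row_sum {W : Matrix m m ℂ} (h : W * Wᴴ = 1) (i : m) : ∑ j, ‖W i j‖^2 = 1 := by
  have := congrFun (congrFun h i) i
  simp [Matrix.mul_apply, Complex.mul_conj, Complex.normSq_eq_norm_sq] at this
  exact_mod_cast this

lemma col_sum {W : Matrix m m ℂ} (h : Wᴴ * W = 1) (j : m) : ∑ i, ‖W i j‖^2 = 1 := by
  have := row_sum (W := Wᴴ) (by simpa using h) j
  simpa using this

lemma tr_two (U V : Matrix m m ℂ) (d e : m → ℝ) :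
    (trace (U * diagonal (fun i => (d i : ℂ)) * Uᴴ * (V * diagonal (fun i => (e i : ℂ)) * Vᴴ))).re
      = ∑ i, ∑ j, ‖(Uᴴ * V) i j‖^2 * (d i * e j) := by
  have : trace (U * diagonal (fun i => (d i : ℂ)) * Uᴴ * (V * diagonal (fun i => (e i : ℂ)) * Vᴴ))
     = trace (diagonal (fun i => (d i : ℂ)) * (Uᴴ * V) * (diagonal (fun i => (e i : ℂ)) * (Uᴴ * V)ᴴ)) := by
    rw [Matrix.mul_assoc, Matrix.mul_assoc, Matrix.trace_mul_comm]
    simp [Matrix.mul_assoc]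
  rw [this, Matrix.trace]
  simp only [Matrix.diag_apply, Matrix.mul_apply (M := diagonal _ * _), Matrix.diagonal_mul, Matrix.conjTranspose_apply]
  rw [Complex.re_sum]
  refine Finset.sum_congr rfl fun i _ => ?_
  rw [Complex.re_sum]
  refine Finset.sum_congr rfl fun j _ => ?_
  have : (d i : ℂ) * (Uᴴ * V) i j * ((e j : ℂ) * star ((Uᴴ * V) i j)) = ((‖(Uᴴ * V) i j‖^2 * (d i * e j) : ℝ) : ℂ) := by
    have := Complex.mul_conj ((Uᴴ * V) i j)
    rw [Complex.normSq_eq_norm_sq] at this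
    push_cast at this ⊢
    rw [← this]
    simp only [Complex.star_def]
    ring
  rw [this, Complex.ofReal_re]

lemma tr_one {U : Matrix m m ℂ} (hU : Uᴴ * U = 1) (d : m → ℝ) :
    (trace (U * diagonal (fun i => (d i : ℂ)) * Uᴴ)).re = ∑ i, d i := by
  rw [Matrix.trace_mul_comm, ← Matrix.mul_assoc, hU]
  simp [Matrix.trace]

lemma tr_cfc {A : Matrix m m ℂ} (hA : A.IsHermitian) (f : ℝ → ℝ) :
    (trace (cfc f A)).re = ∑ i, f (hA.eigenvalues i) := by
  obtain ⟨U, h1, h2, h3⟩ := diagdec hA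
  rw [h3, tr_one h2]

lemma traceNorm_eq {A : Matrix m m ℂ} (hA : A.IsHermitian) :
    traceNorm A = (trace (cfc (fun t : ℝ => |t|) A)).re := by
  rw [tr_cfc hA, traceNorm, dif_pos hA]

lemma cont_spec (f : ℝ → ℝ) (A : Matrix m m ℂ) : ContinuousOn f (spectrum ℝ A) :=
  (Matrix.finite_real_spectrum (A := A)).continuousOn f

lemma mul_cfc_self {A : Matrix m m ℂ} (hA : A.IsHermitian) (f : ℝ → ℝ) :
    A * cfc f A = cfc (fun t => t * f t) A := by
  rw [cfc_mul (fun t : ℝ => t) f A (cont_spec _ _) (cont_spec _ _), cfc_id' ℝ A hA.isSelfAdjoint]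

lemma matLog_eq {A : Matrix m m ℂ} (hA : A.IsHermitian) : matLog A = cfc Real.log A := by
  rw [matLog, mfun, dif_pos hA, hA.cfc_eq]

lemma vn_eq {A : Matrix m m ℂ} (hA : A.IsHermitian) :
    vnEntropy A = - (trace (cfc (fun t : ℝ => t * Real.log t) A)).re := by
  rw [vnEntropy, matLog_eq hA, mul_cfc_self hA]

lemma pinsker {A B : Matrix m m ℂ} (hA : A.PosSemidef) (hB : B.PosDef)
    (tA : trace A = 1) (tB : trace B = 1) :
    traceNorm (A - B) ^ 2 / 2 ≤ - vnEntropy A - (trace (A * cfc Real.log B)).re := by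
  have hAh := hA.isHermitian
  have hBh := hB.isHermitian
  have hD : (A - B).IsHermitian := hAh.sub hBh
  set a := hAh.eigenvalues with ha
  set b := hBh.eigenvalues with hb
  have ha0 : ∀ i, 0 ≤ a i := hA.eigenvalues_nonneg
  have hb0 : ∀ i, 0 < b i := hB.eigenvalues_pos
  have sa : ∑ i, a i = 1 := by
    have := congrArg Complex.re hAh.trace_eq_sum_eigenvalues
    rw [tA] at this
    simpa using this.symm
  have sb : ∑ i, b i = 1 := by
    have := congrArg Complex.re hBh.trace_eq_sum_eigenvalues
    rw [tB] at this
    simpa using this.symm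
  obtain ⟨U, hU1, hU2, hU⟩ := diagdec hAh
  obtain ⟨V, hV1, hV2, hV⟩ := diagdec hBh
  have eA : A = U * diagonal (fun i => (a i : ℂ)) * Uᴴ := by
    have := hU (fun t => t)
    rwa [cfc_id' ℝ A hAh.isSelfAdjoint] at this
  have eB : B = V * diagonal (fun i => (b i : ℂ)) * Vᴴ := by
    have := hV (fun t => t)
    rwa [cfc_id' ℝ B hBh.isSelfAdjoint] at this
  set W := Uᴴ * V with hW
  have hW1 : W * Wᴴ = 1 := by
    rw [hW, conjTranspose_mul, conjTranspose_conjTranspose, Matrix.mul_assoc, ← Matrix.mul_assoc V, hV1]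
    simpa using hU2
  have hW2 : Wᴴ * W = 1 := mul_eq_one_comm.mp hW1
  -- the entropy side
  have hH : - vnEntropy A - (trace (A * cfc Real.log B)).re =
      ∑ i, ∑ j, ‖W i j‖^2 * (a i * Real.log (a i) - a i * Real.log (b j) - a i + b j) := by
    rw [vn_eq hAh, tr_cfc hAh, neg_neg, hV]
    have e0 := tr_two U V a (fun j => Real.log (b j))
    rw [← eA] at e0
    rw [e0]
    have e1 : ∑ i, ∑ j, ‖W i j‖^2 * (a i * Real.log (a i)) = ∑ i, a i * Real.log (a i) := by
      refine Finset.sum_congr rfl fun i _ => ?_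
      rw [← Finset.sum_mul, row_sum hW1, one_mul]
    have e2 : ∑ i, ∑ j, ‖W i j‖^2 * a i = 1 := by
      rw [← sa]
      refine Finset.sum_congr rfl fun i _ => ?_
      rw [← Finset.sum_mul, row_sum hW1, one_mul]
    have e3 : ∑ i, ∑ j, ‖W i j‖^2 * b j = 1 := by
      rw [← sb, Finset.sum_comm]
      refine Finset.sum_congr rfl fun i _ => ?_
      rw [← Finset.sum_mul, col_sum hW2, one_mul]
    simp only [mul_add, mul_sub, Finset.sum_add_distrib, Finset.sum_sub_distrib]
    rw [e1, e2, e3]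
    ring
  -- sign matrix
  set s : ℝ → ℝ := fun t => if 0 ≤ t then 1 else -1 with hs
  set X := cfc s (A - B) with hX
  have hXX : X * X = 1 := by
    rw [hX, ← cfc_mul s s _ (cont_spec _ _) (cont_spec _ _)]
    have : (fun t => s t * s t) = fun _ => (1:ℝ) := by
      funext t
      simp only [hs]
      split_ifs <;> norm_num
    rw [this]
    exact cfc_const_one ℝ (A - B) hD
  have hXh : Xᴴ = X := by
    have : IsSelfAdjoint X := cfc_predicate s (A - B)
    exact this
  have hT : traceNorm (A - B) = (trace ((A - B) * X)).re := by
    rw [traceNorm_eq hD, hX, mul_cfc_self hD]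
    congr 3
    funext t
    simp only [hs]
    split_ifs with h
    · simp [abs_of_nonneg h]
    · simp [abs_of_neg (not_le.mp h)]
  set Y := Uᴴ * X * V with hY
  have hY1 : Y * Yᴴ = 1 := by
    rw [hY]
    simp only [conjTranspose_mul, conjTranspose_conjTranspose, hXh]
    calc Uᴴ * X * V * (Vᴴ * (X * U)) = Uᴴ * (X * (V * Vᴴ) * X) * U := by simp only [Matrix.mul_assoc]
      _ = 1 := by rw [hV1, Matrix.mul_one, hXX, Matrix.mul_one, hU2]
  have hY2 : Yᴴ * Y = 1 := mul_eq_one_comm.mp hY1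
  have hT2 : trace ((A - B) * X) = ∑ i, ∑ j, ((a i : ℂ) - b j) * (Y i j * star (W i j)) := by
    have t1 : trace (A * X) = ∑ i, ∑ j, (a i : ℂ) * (Y i j * star (W i j)) := by
      have : trace (A * X) = trace (diagonal (fun i => (a i : ℂ)) * (Y * Wᴴ)) := by
        rw [hY, hW, conjTranspose_mul, conjTranspose_conjTranspose]
        calc trace (A * X) = trace (U * (diagonal (fun i => (a i : ℂ)) * (Uᴴ * X))) := by
              conv_lhs => rw [eA]
              simp only [Matrix.mul_assoc]
          _ = _ := by
              rw [Matrix.trace_mul_comm]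
              congr 1
              calc _ = diagonal (fun i => (a i : ℂ)) * (Uᴴ * X * 1 * U) := by simp only [Matrix.mul_assoc, Matrix.mul_one, Matrix.one_mul]
                _ = _ := by rw [← hV1]; simp only [Matrix.mul_assoc]
      rw [this, Matrix.trace]
      simp only [Matrix.diag_apply, Matrix.diagonal_mul, Matrix.mul_apply (M := Y), Matrix.conjTranspose_apply, Finset.mul_sum]
    have t2 : trace (B * X) = ∑ i, ∑ j, (b j : ℂ) * (Y i j * star (W i j)) := by
      have : trace (B * X) = trace (Y * (diagonal (fun i => (b i : ℂ)) * Wᴴ)) := by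
        rw [hY, hW, conjTranspose_mul, conjTranspose_conjTranspose]
        calc trace (B * X) = trace (X * B) := Matrix.trace_mul_comm _ _
          _ = trace (U * (Uᴴ * (X * V * diagonal (fun i => (b i : ℂ)) * Vᴴ))) := by
              rw [← Matrix.mul_assoc U, hU1, Matrix.one_mul]
              conv_lhs => rw [eB]
              simp only [Matrix.mul_assoc]
          _ = _ := by
              rw [Matrix.trace_mul_comm]
              simp only [Matrix.mul_assoc]
      rw [this, Matrix.trace]
      simp only [Matrix.diag_apply, Matrix.mul_apply (M := Y), Matrix.diagonal_mul, Matrix.conjTranspose_apply]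
      refine Finset.sum_congr rfl fun i _ => Finset.sum_congr rfl fun j _ => ?_
      ring
    rw [Matrix.sub_mul, Matrix.trace_sub, t1, t2, ← Finset.sum_sub_distrib]
    refine Finset.sum_congr rfl fun i _ => ?_
    rw [← Finset.sum_sub_distrib]
    refine Finset.sum_congr rfl fun j _ => ?_
    ring
  have hT0 : 0 ≤ traceNorm (A - B) := by
    rw [traceNorm, dif_pos hD]
    exact Finset.sum_nonneg fun _ _ => abs_nonneg _
  have hT3 : traceNorm (A - B) ≤ ∑ p : m × m, |a p.1 - b p.2| * (‖Y p.1 p.2‖ * ‖W p.1 p.2‖) := by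
    rw [hT, hT2]
    refine (Complex.re_le_norm _).trans ?_
    rw [← Fintype.sum_prod_type' (f := fun i j => ((a i : ℂ) - b j) * (Y i j * star (W i j)))]
    refine (norm_sum_le _ _).trans (le_of_eq ?_)
    refine Finset.sum_congr rfl fun p _ => ?_
    rw [norm_mul, norm_mul, norm_star, ← Complex.ofReal_sub, Complex.norm_real, Real.norm_eq_abs]
  have hpos : ∀ i j, 0 < a i + 2 * b j := fun i j => by linarith [ha0 i, hb0 j]
  have hCS : (∑ p : m × m, |a p.1 - b p.2| * (‖Y p.1 p.2‖ * ‖W p.1 p.2‖))^2 ≤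
      (∑ p : m × m, ‖W p.1 p.2‖^2 * (3 * (a p.1 - b p.2)^2 / (2 * (a p.1 + 2 * b p.2)))) *
      (∑ p : m × m, ‖Y p.1 p.2‖^2 * (2 / 3 * (a p.1 + 2 * b p.2))) := by
    refine Finset.sum_sq_le_sum_mul_sum_of_sq_le_mul _ ?_ ?_ ?_
    · intro p _
      have := hpos p.1 p.2
      positivity
    · intro p _
      have := hpos p.1 p.2
      positivity
    · intro p _
      have := hpos p.1 p.2
      rw [mul_pow, sq_abs]
      generalize a p.1 + 2 * b p.2 = z at this
      apply le_of_eq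
      field_simp
  have hYs : (∑ p : m × m, ‖Y p.1 p.2‖^2 * (2 / 3 * (a p.1 + 2 * b p.2))) = 2 := by
    rw [Fintype.sum_prod_type]
    have e2 : ∑ i, ∑ j, ‖Y i j‖^2 * a i = 1 := by
      rw [← sa]
      refine Finset.sum_congr rfl fun i _ => ?_
      rw [← Finset.sum_mul, row_sum hY1, one_mul]
    have e3 : ∑ i, ∑ j, ‖Y i j‖^2 * b j = 1 := by
      rw [← sb, Finset.sum_comm]
      refine Finset.sum_congr rfl fun i _ => ?_
      rw [← Finset.sum_mul, col_sum hY2, one_mul]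
    have : ∀ i j, ‖Y i j‖^2 * (2 / 3 * (a i + 2 * b j)) = (2/3) * (‖Y i j‖^2 * a i) + (4/3) * (‖Y i j‖^2 * b j) := by
      intro i j; ring
    simp only [this, Finset.sum_add_distrib, ← Finset.mul_sum]
    rw [e2, e3]
    norm_num
  have hWs : (∑ p : m × m, ‖W p.1 p.2‖^2 * (3 * (a p.1 - b p.2)^2 / (2 * (a p.1 + 2 * b p.2)))) ≤
      - vnEntropy A - (trace (A * cfc Real.log B)).re := by
    rw [hH, Fintype.sum_prod_type]
    refine Finset.sum_le_sum fun i _ => Finset.sum_le_sum fun j _ => ?_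
    exact mul_le_mul_of_nonneg_left (scal2 _ _ (ha0 i) (hb0 j)) (by positivity)
  rw [hYs] at hCS
  have := pow_le_pow_left₀ hT0 hT3 2
  linarith

end mat
section log
open scoped Matrix.Norms.L2Operator
variable {m : Type*} [Fintype m] [DecidableEq m]

lemma log_mono {A B : Matrix m m ℂ} (hA : A.PosDef) (h : A ≤ B) : cfc Real.log A ≤ cfc Real.log B :=
  CFC.log_le_log h hA.isStrictlyPositive

lemma log_smul_mat {A : Matrix m m ℂ} (hA : A.PosDef) {c : ℝ} (hc : 0 < c) :
    cfc Real.log (c • A) = Real.log c • (1 : Matrix m m ℂ) + cfc Real.log A := by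
  have := CFC.log_smul' A hc hA.isStrictlyPositive
  rw [Algebra.algebraMap_eq_smul_one] at this
  exact this

lemma dens_spec {ρ : Matrix m m ℂ} (h : IsDensity ρ) : spectrum ℝ ρ ⊆ Set.Icc 0 1 := by
  have hh := h.1.isHermitian
  rw [hh.spectrum_real_eq_range_eigenvalues]
  rintro _ ⟨i, rfl⟩
  have h0 := h.1.eigenvalues_nonneg
  have sa : ∑ i, hh.eigenvalues i = 1 := by
    have := congrArg Complex.re hh.trace_eq_sum_eigenvalues
    rw [h.2] at this
    simpa using this.symm
  refine ⟨h0 i, ?_⟩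
  rw [← sa]
  exact Finset.single_le_sum (fun i _ => h0 i) (Finset.mem_univ i)

lemma vn_cont : ContinuousOn (vnEntropy (m := m)) {ρ | IsDensity ρ} := by
  have h1 : ContinuousOn (cfc (fun t : ℝ => t * Real.log t) : Matrix m m ℂ → Matrix m m ℂ)
      {a | IsSelfAdjoint a ∧ spectrum ℝ a ⊆ Set.Icc 0 1} :=
    continuousOn_cfc (Matrix m m ℂ) isCompact_Icc _ (Real.continuous_mul_log.continuousOn)
  have h2 : ContinuousOn (fun ρ : Matrix m m ℂ => - (trace (cfc (fun t : ℝ => t * Real.log t) ρ)).re)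
      {ρ | IsDensity ρ} := by
    have h3 : ContinuousOn (cfc (fun t : ℝ => t * Real.log t) : Matrix m m ℂ → Matrix m m ℂ)
      {ρ | IsDensity ρ} := h1.mono fun ρ hρ => ⟨hρ.1.isHermitian.isSelfAdjoint, dens_spec hρ⟩
    have h4 : Continuous fun M : Matrix m m ℂ => - (trace M).re := by fun_prop
    exact h4.comp_continuousOn h3
  exact h2.congr fun ρ hρ => vn_eq hρ.1.isHermitian

end log

section mat2
variable {m : Type*} [Fintype m] [DecidableEq m]

lemma traceNorm_smul {A : Matrix m m ℂ} (hA : A.IsHermitian) (c : ℝ) :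
    traceNorm (c • A) = |c| * traceNorm A := by
  have hc : (c • A).IsHermitian := by
    rw [Matrix.IsHermitian, conjTranspose_smul, hA]; simp
  rw [traceNorm_eq hc]
  rw [← cfc_comp_smul c (fun t : ℝ => |t|) A (by fun_prop) hA.isSelfAdjoint, tr_cfc hA, traceNorm, dif_pos hA,
    Finset.mul_sum]
  simp [abs_mul]

lemma tr_bound {D M : Matrix m m ℂ} (hD : D.IsHermitian) (tD : trace D = 0) {lo hi : ℝ}
    (h1 : lo • (1 : Matrix m m ℂ) ≤ M) (h2 : M ≤ hi • (1 : Matrix m m ℂ)) :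
    (trace (D * M)).re ≤ (hi - lo) * (1 / 2 * traceNorm D) := by
  obtain ⟨U, hU1, hU2, hU⟩ := diagdec hD
  set d := hD.eigenvalues with hd
  have eD : D = U * diagonal (fun i => (d i : ℂ)) * Uᴴ := by
    have := hU (fun t => t)
    rwa [cfc_id' ℝ D hD.isSelfAdjoint] at this
  have sd : ∑ i, d i = 0 := by
    have := congrArg Complex.re hD.trace_eq_sum_eigenvalues
    rw [tD] at this
    simpa using this.symm
  set N := Uᴴ * M * U with hN
  have l1 : ∀ i, lo ≤ (N i i).re := by
    intro i
    have h := ((Matrix.le_iff.mp h1).conjTranspose_mul_mul_same U).diag_nonneg (i := i)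
    rw [Matrix.mul_sub, Matrix.sub_mul] at h
    simp only [Matrix.mul_smul, Matrix.smul_mul, Matrix.mul_one, hU2] at h
    have := (Complex.le_def.mp h).1
    simp at this
    exact this
  have l2 : ∀ i, (N i i).re ≤ hi := by
    intro i
    have h := ((Matrix.le_iff.mp h2).conjTranspose_mul_mul_same U).diag_nonneg (i := i)
    rw [Matrix.mul_sub, Matrix.sub_mul] at h
    simp only [Matrix.mul_smul, Matrix.smul_mul, Matrix.mul_one, hU2] at h
    have := (Complex.le_def.mp h).1
    simp at this
    exact this
  have e : (trace (D * M)).re = ∑ i, d i * (N i i).re := by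
    have : trace (D * M) = trace (diagonal (fun i => (d i : ℂ)) * N) := by
      conv_lhs => rw [eD]
      rw [Matrix.mul_assoc, Matrix.mul_assoc, Matrix.trace_mul_comm, hN]
      simp only [Matrix.mul_assoc]
    rw [this, Matrix.trace, Complex.re_sum]
    refine Finset.sum_congr rfl fun i _ => ?_
    simp [Matrix.diagonal_mul]
  rw [e, traceNorm, dif_pos hD]
  calc ∑ i, d i * (N i i).re ≤ ∑ i, ((hi + lo) / 2 * d i + (hi - lo) / 2 * |d i|) := by
        refine Finset.sum_le_sum fun i _ => ?_
        have a1 := l1 i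
        have a2 := l2 i
        rcases abs_cases (d i) with ⟨h, h'⟩ | ⟨h, h'⟩ <;> rw [h] <;> nlinarith
    _ = _ := by
        rw [Finset.sum_add_distrib, ← Finset.mul_sum, ← Finset.mul_sum, sd]
        ring

end mat2

lemma real_part (f p : ℝ → ℝ) (T : ℝ) (hT : 0 ≤ T) (hf : ContinuousOn f (Set.Icc 0 1))
    (sg : ∀ s ∈ Set.Ioo (0:ℝ) 1, ∀ t ∈ Set.Ioo (0:ℝ) 1, f s - f t ≤ p t * (s - t))
    (mono : ∀ s ∈ Set.Ioo (0:ℝ) 1, ∀ t ∈ Set.Ioo (0:ℝ) 1, s < t →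
      p s - p t ≤ T * ((Real.log (1 - s) - Real.log s) - (Real.log (1 - t) - Real.log t)))
    (x : ℝ) (hx : x ∈ Set.Ioo (0:ℝ) 1) :
    f x - x * f 1 - (1 - x) * f 0 ≤ T * Real.binEntropy x := by
  set h' : ℝ → ℝ := fun s => Real.log (1 - s) - Real.log s with hh'
  have anti : ∀ s ∈ Set.Ioo (0:ℝ) 1, ∀ t ∈ Set.Ioo (0:ℝ) 1, s < t → p t ≤ p s := by
    intro s hs t ht hst
    have a := sg s hs t ht
    have b := sg t ht s hs
    nlinarith
  have habs : ∀ s ∈ Set.Ioo (0:ℝ) 1, ∀ t ∈ Set.Ioo (0:ℝ) 1, |p s - p t| ≤ T * |h' s - h' t| := by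
    intro s hs t ht
    rcases lt_trichotomy s t with h | h | h
    · rw [abs_of_nonneg (sub_nonneg.mpr (anti s hs t ht h))]
      exact (mono s hs t ht h).trans (mul_le_mul_of_nonneg_left (le_abs_self _) hT)
    · simp [h]
    · rw [abs_sub_comm, abs_sub_comm (h' s), abs_of_nonneg (sub_nonneg.mpr (anti t ht s hs h))]
      exact (mono t ht s hs h).trans (mul_le_mul_of_nonneg_left (le_abs_self _) hT)
  have hderiv : ∀ t ∈ Set.Ioo (0:ℝ) 1, HasDerivAt f (p t) t := by
    intro t ht
    rw [hasDerivAt_iff_isLittleO, Asymptotics.isLittleO_iff]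
    intro c hc
    have hcont : ContinuousAt (fun s => T * |h' s - h' t|) t := by
      have h1 : t ≠ 0 := ht.1.ne'
      have h2 : 1 - t ≠ 0 := by linarith [ht.2]
      have : ContinuousAt h' t :=
        ((Real.continuousAt_log h2).comp (f := fun s : ℝ => 1 - s) (by fun_prop)).sub (Real.continuousAt_log h1)
      fun_prop
    have hlt : ∀ᶠ s in nhds t, T * |h' s - h' t| < c :=
      hcont.eventually_lt continuousAt_const (by simpa using hc)
    filter_upwards [hlt, isOpen_Ioo.mem_nhds ht] with s hs hs'
    have a := sg s hs' t ht
    have b := sg t ht s hs'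
    have e : f s - f t - (s - t) • p t ≤ 0 := by simp only [smul_eq_mul]; linarith
    rw [Real.norm_eq_abs, abs_of_nonpos e, Real.norm_eq_abs]
    simp only [smul_eq_mul]
    calc -(f s - f t - (s - t) * p t) ≤ -((p s - p t) * (s - t)) := by linarith
      _ ≤ |(p s - p t) * (s - t)| := neg_le_abs _
      _ = |p s - p t| * |s - t| := abs_mul _ _
      _ ≤ c * |s - t| := by
        apply mul_le_mul_of_nonneg_right _ (abs_nonneg _)
        exact (habs s hs' t ht).trans hs.le
  have hG : ∀ t ∈ Set.Ioo (0:ℝ) 1, HasDerivAt (fun t => f t - T * Real.binEntropy t) (p t - T * h' t) t := by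
    intro t ht
    exact (hderiv t ht).sub ((Real.hasDerivAt_binEntropy ht.1.ne' ht.2.ne).const_mul T)
  have hconv : ConvexOn ℝ (Set.Icc 0 1) (fun t => f t - T * Real.binEntropy t) := by
    refine MonotoneOn.convexOn_of_deriv (convex_Icc 0 1) ?_ ?_ ?_
    · exact hf.sub ((continuous_const.mul Real.binEntropy_continuous).continuousOn)
    · rw [interior_Icc]
      exact fun t ht => (hG t ht).differentiableAt.differentiableWithinAt
    · rw [interior_Icc]
      intro s hs t ht hst
      rw [(hG s hs).deriv, (hG t ht).deriv]
      rcases hst.eq_or_lt with rfl | hst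
      · exact le_rfl
      · have := mono s hs t ht hst
        simp only [hh']
        linarith
  have := hconv.2 (show (1:ℝ) ∈ Set.Icc 0 1 by simp) (show (0:ℝ) ∈ Set.Icc 0 1 by simp)
    hx.1.le (by linarith [hx.2] : 0 ≤ 1 - x) (by ring)
  simp at this
  linarith

lemma binEntropy_eq (x : ℝ) : binEntropy x = Real.binEntropy x := by
  rw [binEntropy, Real.binEntropy_eq_negMulLog_add_negMulLog_one_sub]
  simp [Real.negMulLog]
  ring

section mat3
variable {m : Type*} [Fintype m] [DecidableEq m]

lemma dens_mix {ρ₁ ρ₂ : Matrix m m ℂ} (h1 : IsDensity ρ₁) (h2 : IsDensity ρ₂) {t : ℝ}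
    (ht : t ∈ Set.Icc (0:ℝ) 1) : IsDensity (t • ρ₁ + (1 - t) • ρ₂) := by
  refine ⟨(h1.1.smul ht.1).add (h2.1.smul (sub_nonneg.mpr ht.2)), ?_⟩
  rw [trace_add, trace_smul, trace_smul, h1.2, h2.2, ← add_smul]
  simp

lemma pd_mix {ρ₁ ρ₂ : Matrix m m ℂ} (h1 : ρ₁.PosSemidef) (h2 : ρ₂.PosDef) {t : ℝ}
    (ht : t ∈ Set.Ico (0:ℝ) 1) : (t • ρ₁ + (1 - t) • ρ₂).PosDef :=
  Matrix.PosDef.posSemidef_add (h1.smul ht.1) (h2.smul (sub_pos.mpr ht.2))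

lemma pd_case {ρ₁ ρ₂ : Matrix m m ℂ} (h1 : IsDensity ρ₁) (h2 : IsDensity ρ₂)
    (p1 : ρ₁.PosDef) (p2 : ρ₂.PosDef) (x : ℝ) (hx : x ∈ Set.Ioo (0:ℝ) 1) :
    vnEntropy (x • ρ₁ + (1 - x) • ρ₂) - x * vnEntropy ρ₁ - (1 - x) * vnEntropy ρ₂ ≤
      binEntropy x * ((1 / 2) * traceNorm (ρ₁ - ρ₂))
    ∧ (1 / 2) * x * (1 - x) * traceNorm (ρ₁ - ρ₂) ^ 2 ≤
     vnEntropy (x • ρ₁ + (1 - x) • ρ₂) - x * vnEntropy ρ₁ - (1 - x) * vnEntropy ρ₂ := by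
  set γ : ℝ → Matrix m m ℂ := fun t => t • ρ₁ + (1 - t) • ρ₂ with hγ
  have hd : ∀ t ∈ Set.Icc (0:ℝ) 1, IsDensity (γ t) := fun t ht => dens_mix h1 h2 ht
  have hp : ∀ t ∈ Set.Ioo (0:ℝ) 1, (γ t).PosDef := fun t ht => pd_mix h1.1 p2 ⟨ht.1.le, ht.2⟩
  have hD : (ρ₁ - ρ₂).IsHermitian := h1.1.isHermitian.sub h2.1.isHermitian
  have hT0 : 0 ≤ traceNorm (ρ₁ - ρ₂) := by
    rw [traceNorm, dif_pos hD]
    exact Finset.sum_nonneg fun _ _ => abs_nonneg _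
  have hself : ∀ t ∈ Set.Ioo (0:ℝ) 1, vnEntropy (γ t) = - (trace (γ t * cfc Real.log (γ t))).re := by
    intro t ht
    rw [vnEntropy, matLog_eq (hp t ht).isHermitian]
  constructor
  · have key := real_part (fun t => vnEntropy (γ t))
      (fun t => - (trace ((ρ₁ - ρ₂) * cfc Real.log (γ t))).re) (1 / 2 * traceNorm (ρ₁ - ρ₂)) (by positivity)
      ?_ ?_ ?_ x hx
    · rw [binEntropy_eq, mul_comm (Real.binEntropy x)]
      simpa [hγ] using key
    · refine vn_cont.comp (Continuous.continuousOn ?_) hd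
      fun_prop
    · intro s hs t ht
      have hk := pinsker (hd s ⟨hs.1.le, hs.2.le⟩).1 (hp t ht) (hd s ⟨hs.1.le, hs.2.le⟩).2 (hd t ⟨ht.1.le, ht.2.le⟩).2
      have hnn : 0 ≤ traceNorm (γ s - γ t) ^ 2 / 2 := by positivity
      have e : γ s = γ t + (s - t) • (ρ₁ - ρ₂) := by
        simp only [hγ]; module
      have e2 : (trace (γ s * cfc Real.log (γ t))).re = (trace (γ t * cfc Real.log (γ t))).re
          + (s - t) * (trace ((ρ₁ - ρ₂) * cfc Real.log (γ t))).re := by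
        rw [e, Matrix.add_mul, Matrix.smul_mul, trace_add, trace_smul]
        simp
      have e3 := hself t ht
      linarith
    · intro s hs t ht hst
      have hs1 : 0 < 1 - s := by linarith [hs.2]
      have ht1 : 0 < 1 - t := by linarith [ht.2]
      have hs0 := hs.1
      have ht0 := ht.1
      have b1 : cfc Real.log (γ t) ≤ Real.log (t / s) • (1 : Matrix m m ℂ) + cfc Real.log (γ s) := by
        rw [← log_smul_mat (hp s hs) (by positivity)]
        refine log_mono (hp t ht) ?_
        rw [Matrix.le_iff]
        have : (t / s) • γ s - γ t = ((t - s) / s) • ρ₂ := by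
          simp only [hγ, smul_add, smul_smul]
          rw [show t / s * s = t by field_simp]
          rw [show t / s * (1 - s) = (1 - t) + (t - s) / s by field_simp; ring]
          module
        rw [this]
        exact h2.1.smul (div_nonneg (by linarith) hs0.le)
      have b2 : Real.log ((1 - t) / (1 - s)) • (1 : Matrix m m ℂ) + cfc Real.log (γ s) ≤ cfc Real.log (γ t) := by
        rw [← log_smul_mat (hp s hs) (by positivity)]
        refine log_mono ((hp s hs).smul (by positivity)) ?_
        rw [Matrix.le_iff]
        have : γ t - ((1 - t) / (1 - s)) • γ s = ((t - s) / (1 - s)) • ρ₁ := by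
          simp only [hγ, smul_add, smul_smul]
          rw [show (1 - t) / (1 - s) * (1 - s) = 1 - t by field_simp]
          rw [show (1 - t) / (1 - s) * s = t - (t - s) / (1 - s) by field_simp; ring]
          module
        rw [this]
        exact h1.1.smul (div_nonneg (by linarith) hs1.le)
      have := tr_bound hD (by rw [trace_sub, h1.2, h2.2, sub_self])
        (le_sub_iff_add_le.mpr b2) (sub_le_iff_le_add.mpr b1)
      rw [Matrix.mul_sub, trace_sub, Complex.sub_re, Real.log_div ht0.ne' hs0.ne',
        Real.log_div ht1.ne' hs1.ne'] at this
      linarith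
  · have hx' : x ∈ Set.Icc (0:ℝ) 1 := ⟨hx.1.le, hx.2.le⟩
    have k1 := pinsker h1.1 (hp x hx) h1.2 (hd x hx').2
    have k2 := pinsker h2.1 (hp x hx) h2.2 (hd x hx').2
    have e1 : ρ₁ - γ x = (1 - x) • (ρ₁ - ρ₂) := by simp only [hγ]; module
    have e2 : ρ₂ - γ x = (-x) • (ρ₁ - ρ₂) := by simp only [hγ]; module
    rw [e1, traceNorm_smul hD, mul_pow, sq_abs] at k1
    rw [e2, traceNorm_smul hD, mul_pow, sq_abs] at k2
    have e3 := hself x hx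
    have e4 : (trace (γ x * cfc Real.log (γ x))).re = x * (trace (ρ₁ * cfc Real.log (γ x))).re
          + (1 - x) * (trace (ρ₂ * cfc Real.log (γ x))).re := by
      generalize cfc Real.log (γ x) = L
      simp only [hγ]
      rw [Matrix.add_mul, Matrix.smul_mul, Matrix.smul_mul, trace_add, trace_smul, trace_smul]
      simp
    change _ ≤ vnEntropy (γ x) - _ - _
    have m1 := mul_le_mul_of_nonneg_left k1 hx.1.le
    have m2 := mul_le_mul_of_nonneg_left k2 (by linarith [hx.2] : 0 ≤ 1 - x)
    rw [e3, e4]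
    nlinarith

end mat3

theorem concavity_basic_bounds (n : ℕ) (hn : 1 ≤ n) (x : ℝ) (hx : x ∈ Set.Ioo (0:ℝ) 1)
    (ρ₁ ρ₂ : Matrix (Fin n) (Fin n) ℂ) (h1 : IsDensity ρ₁) (h2 : IsDensity ρ₂) :
    binEntropy x * ((1 / 2) * traceNorm (ρ₁ - ρ₂))
      ≥ vnEntropy (x • ρ₁ + (1 - x) • ρ₂) - x * vnEntropy ρ₁ - (1 - x) * vnEntropy ρ₂
    ∧ vnEntropy (x • ρ₁ + (1 - x) • ρ₂) - x * vnEntropy ρ₁ - (1 - x) * vnEntropy ρ₂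
      ≥ (1 / 2) * x * (1 - x) * traceNorm (ρ₁ - ρ₂) ^ 2 := by
  have hn0 : (0:ℝ) < n := by exact_mod_cast hn
  set τ : Matrix (Fin n) (Fin n) ℂ := ((n:ℝ)⁻¹) • 1 with hτ
  have pτ : τ.PosDef := Matrix.PosDef.one.smul (inv_pos.mpr hn0)
  have dτ : IsDensity τ := by
    refine ⟨pτ.posSemidef, ?_⟩
    have : (n:ℂ) ≠ 0 := by exact_mod_cast hn0.ne'
    rw [hτ, trace_smul, trace_one]
    simp [this]
  have hD : (ρ₁ - ρ₂).IsHermitian := h1.1.isHermitian.sub h2.1.isHermitian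
  have hx' : x ∈ Set.Icc (0:ℝ) 1 := ⟨hx.1.le, hx.2.le⟩
  have h3 := dens_mix h1 h2 hx'
  have hcont : ∀ ρ : Matrix (Fin n) (Fin n) ℂ, IsDensity ρ →
      Filter.Tendsto (fun t : ℝ => vnEntropy (t • ρ + (1 - t) • τ)) (nhdsWithin 1 (Set.Ico 0 1))
        (nhds (vnEntropy ρ)) := by
    intro ρ hρ
    have hc : ContinuousOn (fun t : ℝ => vnEntropy (t • ρ + (1 - t) • τ)) (Set.Icc 0 1) := by
      refine vn_cont.comp (Continuous.continuousOn ?_) (fun t ht => dens_mix hρ dτ ht)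
      fun_prop
    have := (hc 1 (by simp)).tendsto
    simp only [one_smul, sub_self, zero_smul, add_zero] at this
    exact this.mono_left (nhdsWithin_mono _ Set.Ico_subset_Icc_self)
  have hid : Filter.Tendsto (fun t : ℝ => t) (nhdsWithin 1 (Set.Ico 0 1)) (nhds 1) :=
    Filter.tendsto_id.mono_left nhdsWithin_le_nhds
  have hT : Filter.Tendsto (fun t : ℝ => t * traceNorm (ρ₁ - ρ₂)) (nhdsWithin 1 (Set.Ico 0 1))
      (nhds (traceNorm (ρ₁ - ρ₂))) := by
    simpa using hid.mul_const (traceNorm (ρ₁ - ρ₂))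
  have hS := ((hcont _ h3).sub ((hcont _ h1).const_mul x)).sub ((hcont _ h2).const_mul (1 - x))
  have hne : (nhdsWithin (1:ℝ) (Set.Ico 0 1)).NeBot := by
    rw [← mem_closure_iff_nhdsWithin_neBot, closure_Ico (by norm_num)]
    simp
  have hall : ∀ t ∈ Set.Ico (0:ℝ) 1, _ := fun t ht =>
    pd_case (dens_mix h1 dτ ⟨ht.1, ht.2.le⟩) (dens_mix h2 dτ ⟨ht.1, ht.2.le⟩)
      (pd_mix h1.1 pτ ht) (pd_mix h2.1 pτ ht) x hx
  have e1 : ∀ t ∈ Set.Ico (0:ℝ) 1, traceNorm (t • ρ₁ + (1 - t) • τ - (t • ρ₂ + (1 - t) • τ)) =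
      t * traceNorm (ρ₁ - ρ₂) := by
    intro t ht
    rw [show t • ρ₁ + (1 - t) • τ - (t • ρ₂ + (1 - t) • τ) = t • (ρ₁ - ρ₂) by module,
      traceNorm_smul hD, abs_of_nonneg ht.1]
  have e2 : ∀ t : ℝ, x • (t • ρ₁ + (1 - t) • τ) + (1 - x) • (t • ρ₂ + (1 - t) • τ) =
      t • (x • ρ₁ + (1 - x) • ρ₂) + (1 - t) • τ := by
    intro t; module
  constructor
  · refine le_of_tendsto_of_tendsto hS ((hT.const_mul (1 / 2)).const_mul (binEntropy x)) ?_
    filter_upwards [self_mem_nhdsWithin] with t ht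
    have := (hall t ht).1
    rwa [e1 t ht, e2 t] at this
  · refine le_of_tendsto_of_tendsto ((hT.pow 2).const_mul (1 / 2 * x * (1 - x))) hS ?_
    filter_upwards [self_mem_nhdsWithin] with t ht
    have := (hall t ht).2
    rwa [e1 t ht, e2 t] at this
end

section
/- Let n ≥ 1 and let ρ₁, ρ₂ be density matrices (n×n complex positive semidefinite matrices of trace 1) such that ρ_Av := (ρ₁ + ρ₂)/2 is positive definite. Then (1/2)·[ log Tr(ρ₁² · ρ_Av⁻¹) + log Tr(ρ₂² · ρ_Av⁻¹) ] ≤ log 2. -/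
open Matrix ComplexOrder

theorem aux_bound {n : ℕ} (R T A : Matrix (Fin n) (Fin n) ℂ) (hR : R.PosSemidef)
    (hT : T.PosSemidef) (htr : Matrix.trace R = 1) (hA : A.PosDef)
    (h : A + A = R + T) :
    Real.log (Matrix.trace (R * R * A⁻¹)).re ≤ Real.log 2 := by
  have hu : IsUnit A.det := (Matrix.isUnit_iff_isUnit_det A).mp hA.isUnit
  have hB : (A⁻¹).PosSemidef := hA.inv.posSemidef
  have e1 : A⁻¹ * A = 1 := Matrix.nonsing_inv_mul A hu
  have e2 : A * A⁻¹ = 1 := Matrix.mul_nonsing_inv A hu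
  have hRh : Rᴴ = R := hR.1
  have hTh : Tᴴ = T := hT.1
  generalize A⁻¹ = B at *
  have hBh : Bᴴ = B := hB.1
  have hTe : T = A + A - R := by rw [h]; abel
  have p1 : R * B * T = R + R - R * B * R := by
    rw [hTe, mul_sub, mul_add, mul_assoc R B A, e1, mul_one]
  have p2 : T * B * R = R + R - R * B * R := by
    rw [hTe, sub_mul, add_mul, e2, sub_mul, add_mul, one_mul]
  have p3 : R * B * T * B * R + T * B * R * B * T = R * B * T + R * B * T := by
    have q1 : R * B * T * B * R = R * B * (R * B * T) := by
      have q0 : R * B * (R * B * T) = R * B * (T * B * R) := by rw [p1, p2]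
      rw [q0]; simp only [mul_assoc]
    have q2 : T * B * R * B * T = T * B * (R * B * T) := by simp only [mul_assoc]
    rw [q1, q2, ← add_mul, ← add_mul, ← h, add_mul, e2, add_mul, one_mul]
  have s1 : (R * B * T * B * R).PosSemidef := by
    have := hT.conjTranspose_mul_mul_same (B * R)
    simpa [Matrix.conjTranspose_mul, hRh, hBh, mul_assoc] using this
  have s2 : (T * B * R * B * T).PosSemidef := by
    have := hR.conjTranspose_mul_mul_same (B * T)
    simpa [Matrix.conjTranspose_mul, hTh, hBh, mul_assoc] using this
  have s3 : (R * B * R).PosSemidef := by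
    have := hB.conjTranspose_mul_mul_same R
    simpa [hRh] using this
  have t := (Complex.le_def.mp (s1.add s2).trace_nonneg).1
  have t3 := (Complex.le_def.mp s3.trace_nonneg).1
  rw [p3, p1] at t
  have hc : Matrix.trace (R * R * B) = Matrix.trace (R * B * R) := by
    rw [mul_assoc R R B, Matrix.trace_mul_comm]
  rw [hc]
  simp only [Matrix.trace_add, Matrix.trace_sub, htr, Complex.add_re, Complex.sub_re,
    Complex.one_re, Complex.zero_re] at t t3
  rcases t3.eq_or_lt with h0 | h0
  · rw [← h0, Real.log_zero]
    exact Real.log_nonneg (by norm_num)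
  · exact Real.log_le_log h0 (by linarith)

theorem renyi2_half_bound (n : ℕ) (hn : 1 ≤ n)
    (ρ₁ ρ₂ : Matrix (Fin n) (Fin n) ℂ) (h1 : IsDensity ρ₁) (h2 : IsDensity ρ₂)
    (hAv : ((1 / 2 : ℝ) • (ρ₁ + ρ₂)).PosDef) :
    (1 / 2) * (Real.log (Matrix.trace (ρ₁ * ρ₁ * ((1 / 2 : ℝ) • (ρ₁ + ρ₂))⁻¹)).re
        + Real.log (Matrix.trace (ρ₂ * ρ₂ * ((1 / 2 : ℝ) • (ρ₁ + ρ₂))⁻¹)).re)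
      ≤ Real.log 2 := by
  have hh : (1 / 2 : ℝ) • (ρ₁ + ρ₂) + (1 / 2 : ℝ) • (ρ₁ + ρ₂) = ρ₁ + ρ₂ := by
    rw [← add_smul]; norm_num
  have a := aux_bound ρ₁ ρ₂ _ h1.1 h2.1 h1.2 hAv hh
  have b := aux_bound ρ₂ ρ₁ _ h2.1 h1.1 h2.2 hAv (hh.trans (add_comm _ _))
  linarith
end

section
/- Let n ≥ 1, let a > 1, let c > 0, and let ρ, γ be density matrices (n×n complex positive semidefinite matrices of trace 1) with γ positive definite and ρ ≤ c·γ in the Loewner order. Then the sandwiched Renyi relative entropy satisfies H̃_a(ρ, γ) ≤ log c. -/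
open Matrix ComplexOrder

lemma mfun_spec {n : ℕ} (A : Matrix (Fin n) (Fin n) ℂ) (hA : A.IsHermitian) :
    ∃ U : Matrix (Fin n) (Fin n) ℂ, U * Uᴴ = 1 ∧ Uᴴ * U = 1 ∧
      (∀ f : ℝ → ℝ, mfun f A =
        U * diagonal (fun i => ((f (hA.eigenvalues i) : ℝ) : ℂ)) * Uᴴ) ∧
      A = U * diagonal (fun i => ((hA.eigenvalues i : ℝ) : ℂ)) * Uᴴ := by
  refine ⟨hA.eigenvectorUnitary, ?_, ?_, ?_, ?_⟩
  · exact Unitary.coe_mul_star_self hA.eigenvectorUnitary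
  · exact Unitary.coe_star_mul_self hA.eigenvectorUnitary
  · intro f
    rw [mfun, dif_pos hA, Matrix.IsHermitian.cfc, Unitary.conjStarAlgAut_apply]
    rfl
  · have := hA.spectral_theorem
    rw [Unitary.conjStarAlgAut_apply] at this
    exact this

lemma udiag_mul {n : ℕ} {U : Matrix (Fin n) (Fin n) ℂ} (hU : Uᴴ * U = 1) (d e : Fin n → ℂ) :
    (U * diagonal d * Uᴴ) * (U * diagonal e * Uᴴ) =
      U * diagonal (fun i => d i * e i) * Uᴴ := by
  calc _ = U * diagonal d * (Uᴴ * U) * diagonal e * Uᴴ := by simp only [Matrix.mul_assoc]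
    _ = _ := by rw [hU, Matrix.mul_one, Matrix.mul_assoc U, diagonal_mul_diagonal]

lemma conj_quad {n : ℕ} (U : Matrix (Fin n) (Fin n) ℂ) (d : Fin n → ℝ) (v : Fin n → ℂ) :
    star v ⬝ᵥ ((U * diagonal (fun i => ((d i : ℝ) : ℂ)) * Uᴴ) *ᵥ v) =
      ((∑ j, d j * Complex.normSq ((Uᴴ *ᵥ v) j) : ℝ) : ℂ) := by
  have h : star v ⬝ᵥ ((U * diagonal (fun i => ((d i : ℝ) : ℂ)) * Uᴴ) *ᵥ v) =
      star (Uᴴ *ᵥ v) ⬝ᵥ (diagonal (fun i => ((d i : ℝ) : ℂ)) *ᵥ (Uᴴ *ᵥ v)) := by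
    rw [star_mulVec, conjTranspose_conjTranspose, ← dotProduct_mulVec, mulVec_mulVec,
      mulVec_mulVec, Matrix.mul_assoc]
  rw [h, dotProduct, Complex.ofReal_sum]
  refine Finset.sum_congr rfl fun j _ => ?_
  rw [mulVec_diagonal, Complex.ofReal_mul, Complex.normSq_eq_conj_mul_self, Pi.star_apply]
  simp only [Complex.star_def]
  ring

lemma trace_udiag_mul {n : ℕ} (V M : Matrix (Fin n) (Fin n) ℂ) (x : Fin n → ℂ) :
    trace (V * diagonal x * Vᴴ * M) =
      ∑ i, x i * (star (fun k => V k i) ⬝ᵥ (M *ᵥ (fun k => V k i))) := by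
  rw [Matrix.mul_assoc, Matrix.mul_assoc, trace_mul_comm, Matrix.mul_assoc, trace]
  refine Finset.sum_congr rfl fun i _ => ?_
  rw [diag_apply, diagonal_mul, Matrix.mul_assoc]
  rfl

lemma scalar_tangent {q r y : ℝ} (hq : 0 < q) (hr : 0 < r) (hy : 0 < y) :
    r ^ q * (1 + q - q * r * y⁻¹) ≤ y ^ q := by
  have h1 : y ^ q = r ^ q * (r / y) ^ (-q) := by
    rw [Real.div_rpow hr.le hy.le, Real.rpow_neg hr.le, Real.rpow_neg hy.le]
    have := (Real.rpow_pos_of_pos hr q).ne'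
    have := (Real.rpow_pos_of_pos hy q).ne'
    field_simp
  rw [h1]
  refine mul_le_mul_of_nonneg_left ?_ (Real.rpow_pos_of_pos hr q).le
  have hu : 0 < r / y := div_pos hr hy
  rw [Real.rpow_def_of_pos hu]
  have h2 := Real.add_one_le_exp (Real.log (r / y) * -q)
  have h3 := Real.log_le_sub_one_of_pos hu
  have h4 := mul_le_mul_of_nonneg_left h3 hq.le
  have : q * r * y⁻¹ = q * (r / y) := by ring
  rw [this]
  linarith

/-- Key bound for an eigenvector of `X ≤ c Y`. -/
lemma eig_bound {n : ℕ} {U X : Matrix (Fin n) (Fin n) ℂ} (hU : U * Uᴴ = 1) (hU' : Uᴴ * U = 1)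
    {y : Fin n → ℝ} (hy : ∀ j, 0 < y j) {c q x : ℝ} (hc : 0 < c) (hq : 0 < q) (hx : 0 < x)
    (hX : X.PosSemidef)
    (hle : (c • (U * diagonal (fun i => ((y i : ℝ) : ℂ)) * Uᴴ) - X).PosSemidef)
    {v : Fin n → ℂ} (hv : X *ᵥ v = (x : ℂ) • v) (hvn : star v ⬝ᵥ v = 1) :
    (x / c) ^ q ≤ ∑ j, y j ^ q * Complex.normSq ((Uᴴ *ᵥ v) j) := by
  set p : Fin n → ℝ := fun j => Complex.normSq ((Uᴴ *ᵥ v) j) with hp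
  have hp0 : ∀ j, 0 ≤ p j := fun j => Complex.normSq_nonneg _
  have hp1 : ∑ j, p j = 1 := by
    have h := conj_quad U (fun _ => 1) v
    simp only [Complex.ofReal_one, diagonal_one, Matrix.mul_one, hU, one_mulVec, hvn, one_mul] at h
    exact_mod_cast h.symm
  set β : ℝ := ∑ j, (y j)⁻¹ * p j with hβ
  have hβ0 : 0 ≤ β := Finset.sum_nonneg fun j _ => mul_nonneg (inv_nonneg.2 (hy j).le) (hp0 j)
  set Z := U * diagonal (fun i => (((y i)⁻¹ : ℝ) : ℂ)) * Uᴴ with hZ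
  set Y := U * diagonal (fun i => ((y i : ℝ) : ℂ)) * Uᴴ with hY
  have hYZ : Y * Z = 1 := by
    rw [hY, hZ, udiag_mul hU']
    have : (fun i => ((y i : ℝ) : ℂ) * (((y i)⁻¹ : ℝ) : ℂ)) = fun _ => 1 := by
      funext i
      rw [← Complex.ofReal_mul, mul_inv_cancel₀ (hy i).ne', Complex.ofReal_one]
    rw [this, diagonal_one, Matrix.mul_one, hU]
  have hZq : star v ⬝ᵥ (Z *ᵥ v) = (β : ℂ) := conj_quad U (fun i => (y i)⁻¹) v
  set w := Z *ᵥ v with hw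
  have hYw : Y *ᵥ w = v := by rw [hw, mulVec_mulVec, hYZ, one_mulVec]
  have hwv : star w ⬝ᵥ v = (β : ℂ) := by
    rw [star_dotProduct, hZq]; simp
  have hXv : ∀ u : Fin n → ℂ, star v ⬝ᵥ (X *ᵥ u) = (x : ℂ) * (star v ⬝ᵥ u) := by
    intro u
    have h : star v ᵥ* X = (x : ℂ) • star v := by
      have := congrArg star hv
      rw [star_mulVec, hX.1.eq, star_smul] at this
      simpa using this
    rw [dotProduct_mulVec, h, smul_dotProduct, smul_eq_mul]
  have h1 : 0 ≤ (star w ⬝ᵥ ((c • Y - X) *ᵥ w)).re :=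
    (Complex.le_def.1 (hle.dotProduct_mulVec_nonneg w)).1
  rw [sub_mulVec, smul_mulVec, hYw, dotProduct_sub, dotProduct_smul, hwv] at h1
  have h2 : 0 ≤ (star (w - (β : ℂ) • v) ⬝ᵥ (X *ᵥ (w - (β : ℂ) • v))).re :=
    (Complex.le_def.1 (hX.dotProduct_mulVec_nonneg _)).1
  rw [mulVec_sub, mulVec_smul, hv, star_sub, sub_dotProduct, dotProduct_sub, dotProduct_sub,
    star_smul, smul_dotProduct, smul_dotProduct, hXv, hZq] at h2
  simp only [dotProduct_smul, hwv, hvn, smul_eq_mul, Complex.star_def, Complex.conj_ofReal] at h2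
  have e1 : (star w ⬝ᵥ (X *ᵥ w)).re ≤ c * β := by
    simpa using h1
  have e2 : x * β * β ≤ (star w ⬝ᵥ (X *ᵥ w)).re := by
    have e3 : (star w ⬝ᵥ X *ᵥ w - (β : ℂ) * ((x : ℂ) * (β : ℂ)) -
        ((β : ℂ) * ((x : ℂ) * (β : ℂ)) - (β : ℂ) * ((β : ℂ) * ((x : ℂ) * 1)))) =
        star w ⬝ᵥ X *ᵥ w - ((x * β * β : ℝ) : ℂ) := by push_cast; ring
    rw [e3, Complex.sub_re, Complex.ofReal_re] at h2
    linarith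
  have hxb : x * β ≤ c := by
    rcases hβ0.eq_or_lt with h | h
    · rw [← h]; linarith
    · exact le_of_mul_le_mul_right (e2.trans e1) h
  have hr : 0 < x / c := div_pos hx hc
  calc (x / c) ^ q ≤ (x / c) ^ q * (1 + q - q * (x / c) * β) := by
        refine le_mul_of_one_le_right (Real.rpow_pos_of_pos hr q).le ?_
        have : x / c * β ≤ 1 := by rw [div_mul_eq_mul_div]; exact (div_le_one hc).2 hxb
        nlinarith
    _ = ∑ j, ((x / c) ^ q * (1 + q - q * (x / c) * (y j)⁻¹)) * p j := by
        have : ∀ j, ((x / c) ^ q * (1 + q - q * (x / c) * (y j)⁻¹)) * p j =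
          (x / c) ^ q * (1 + q) * p j - (x / c) ^ q * (q * (x / c)) * ((y j)⁻¹ * p j) := by
          intro j; ring
        simp only [this]
        rw [Finset.sum_sub_distrib, ← Finset.mul_sum, ← Finset.mul_sum, hp1, ← hβ]
        ring
    _ ≤ _ := Finset.sum_le_sum fun j _ =>
        mul_le_mul_of_nonneg_right (scalar_tangent hq hr (hy j)) (hp0 j)

theorem sandRenyi_le_log_of_loewner (n : ℕ) (hn : 1 ≤ n) (a : ℝ) (ha : 1 < a)
    (c : ℝ) (hc : 0 < c)
    (ρ γ : Matrix (Fin n) (Fin n) ℂ) (hρ : IsDensity ρ) (hγ : IsDensity γ)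
    (hγ' : γ.PosDef) (hle : (c • γ - ρ).PosSemidef) :
    sandRenyiRel a ρ γ ≤ Real.log c := by
  have ha0 : a ≠ 0 := by linarith
  have hc1 : 1 ≤ c := by
    have h := (Complex.le_def.1 hle.trace_nonneg).1
    rw [trace_sub, trace_smul, hρ.2, hγ.2] at h
    simpa using h
  obtain ⟨U, hU, hU', hUf, hUγ⟩ := mfun_spec γ hγ'.1
  set g := hγ'.1.eigenvalues with hg
  have hgpos : ∀ j, 0 < g j := hγ'.eigenvalues_pos
  set s := (1 - a) / (2 * a) with hs
  set P := matRpow s γ with hP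
  have hPU : P = U * diagonal (fun i => ((g i ^ s : ℝ) : ℂ)) * Uᴴ := hUf _
  have hPH : Pᴴ = P := by
    rw [hPU]
    simp only [conjTranspose_mul, conjTranspose_conjTranspose, diagonal_conjTranspose,
      Matrix.mul_assoc]
    congr 3
    funext i
    simp
  set X := P * ρ * P with hX
  have hXpsd : X.PosSemidef := by
    have := hρ.1.mul_mul_conjTranspose_same P
    rwa [hPH] at this
  set y : Fin n → ℝ := fun j => g j ^ (1 / a) with hy
  have hypos : ∀ j, 0 < y j := fun j => Real.rpow_pos_of_pos (hgpos j) _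
  have hPγP : P * γ * P = U * diagonal (fun i => ((y i : ℝ) : ℂ)) * Uᴴ := by
    rw [hPU]
    nth_rewrite 1 [hUγ]
    rw [udiag_mul hU', udiag_mul hU']
    congr 3
    funext i
    rw [← Complex.ofReal_mul, ← Complex.ofReal_mul]
    congr 1
    nth_rewrite 2 [← Real.rpow_one (g i)]
    rw [← Real.rpow_add (hgpos i), ← Real.rpow_add (hgpos i), hy]
    congr 1
    rw [hs]; field_simp; ring
  have hXle : (c • (U * diagonal (fun i => ((y i : ℝ) : ℂ)) * Uᴴ) - X).PosSemidef := by
    have := hle.mul_mul_conjTranspose_same P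
    rw [hPH, Matrix.mul_sub, Matrix.sub_mul, Matrix.mul_smul, Matrix.smul_mul, hPγP] at this
    exact this
  set q := a - 1 with hq
  have hq0 : 0 < q := by rw [hq]; linarith
  set M := U * diagonal (fun i => ((y i ^ q : ℝ) : ℂ)) * Uᴴ with hM
  have hPMP : P * M * P = 1 := by
    rw [hPU, hM, udiag_mul hU', udiag_mul hU']
    have : (fun i => ((g i ^ s : ℝ) : ℂ) * ((y i ^ q : ℝ) : ℂ) * ((g i ^ s : ℝ) : ℂ)) =
        fun _ => 1 := by
      funext i
      rw [← Complex.ofReal_mul, ← Complex.ofReal_mul, hy, ← Real.rpow_mul (hgpos i).le,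
        ← Real.rpow_add (hgpos i), ← Real.rpow_add (hgpos i)]
      have : s + 1 / a * q + s = 0 := by rw [hs, hq]; field_simp; ring
      rw [this]; simp
    rw [this, diagonal_one, Matrix.mul_one, hU]
  have htr : trace (X * M) = 1 := by
    have h : trace (X * M) = trace (ρ * (P * M * P)) := by
      rw [hX, Matrix.mul_assoc, Matrix.mul_assoc, trace_mul_comm]
      simp only [Matrix.mul_assoc]
    rw [h, hPMP, Matrix.mul_one, hρ.2]
  obtain ⟨V, hV, hV', hVf, hVX⟩ := mfun_spec X hXpsd.1
  set x := hXpsd.1.eigenvalues with hx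
  have hx0 : ∀ i, 0 ≤ x i := hXpsd.eigenvalues_nonneg
  set T := (trace (matRpow a X)).re with hT
  have hTsum : T = ∑ i, x i ^ a := by
    have : trace (matRpow a X) = ((∑ i, x i ^ a : ℝ) : ℂ) := by
      rw [matRpow, hVf, trace_mul_comm, ← Matrix.mul_assoc, hV', Matrix.one_mul, trace_diagonal,
        Complex.ofReal_sum]
    rw [hT, this, Complex.ofReal_re]
  have hsum : ∑ i, x i * ∑ j, y j ^ q * Complex.normSq ((Uᴴ *ᵥ (fun k => V k i)) j) = 1 := by
    have h := htr
    rw [hVX, trace_udiag_mul] at h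
    simp only [hM, conj_quad] at h
    exact_mod_cast h
  have hTle : T ≤ c ^ q := by
    have hterm : ∀ i, x i ^ a ≤
        c ^ q * (x i * ∑ j, y j ^ q * Complex.normSq ((Uᴴ *ᵥ (fun k => V k i)) j)) := by
      intro i
      rcases (hx0 i).eq_or_lt with h | h
      · rw [← h, Real.zero_rpow ha0]; simp
      · have hn1 : star (fun k => V k i) ⬝ᵥ (fun k => V k i) = 1 := by
          have := congrFun (congrFun hV' i) i
          rw [one_apply_eq] at this
          exact this
        have hev : X *ᵥ (fun k => V k i) = (x i : ℂ) • (fun k => V k i) := by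
          have h1 : X * V = V * diagonal (fun i => ((x i : ℝ) : ℂ)) := by
            nth_rewrite 1 [hVX]
            rw [Matrix.mul_assoc, hV', Matrix.mul_one]
          funext k
          have h2 := congrFun (congrFun h1 k) i
          rw [mul_diagonal, mul_comm] at h2
          exact h2
        have hb := eig_bound hU hU' hypos hc hq0 h hXpsd hXle hev hn1
        have hcq := Real.rpow_pos_of_pos hc q
        have e : x i ^ a = c ^ q * (x i * (x i / c) ^ q) := by
          rw [Real.div_rpow h.le hc.le]
          have : a = 1 + q := by rw [hq]; ring
          rw [this, Real.rpow_add h, Real.rpow_one]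
          field_simp
        rw [e]
        gcongr
    rw [hTsum]
    calc _ ≤ _ := Finset.sum_le_sum fun i _ => hterm i
      _ = c ^ q := by rw [← Finset.mul_sum, hsum, mul_one]
  have hT0 : 0 ≤ T := by
    rw [hTsum]; exact Finset.sum_nonneg fun i _ => Real.rpow_nonneg (hx0 i) _
  change q⁻¹ * Real.log T ≤ Real.log c
  rcases hT0.eq_or_lt with h | h
  · rw [← h]; simpa using Real.log_nonneg hc1
  · have := Real.log_le_log h hTle
    rw [Real.log_rpow hc] at this
    rw [inv_mul_le_iff₀ hq0]
    exact this
end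

section
/- Let n ≥ 1, let x ∈ (0,1), let a > 1, and let ρ₁, ρ₂ be density matrices (n×n complex positive semidefinite matrices of trace 1) such that ρ_Av := x·ρ₁ + (1−x)·ρ₂ is positive definite. Then x·H̃_a(ρ₁, ρ_Av) + (1−x)·H̃_a(ρ₂, ρ_Av) ≤ h(x), where h(x) = −x·log x − (1−x)·log(1−x) is the binary entropy. -/
open Matrix ComplexOrder

lemma sr_quad {m : Type*} [Fintype m] [DecidableEq m] (Z : Matrix m m ℂ) (k : m → ℝ) (i : m) :
    (Zᴴ * diagonal (fun j => (k j : ℂ)) * Z) i i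
      = ((∑ j, Complex.normSq (Z j i) * k j : ℝ) : ℂ) := by
  rw [Matrix.mul_apply]
  push_cast
  refine Finset.sum_congr rfl fun j _ => ?_
  rw [Matrix.mul_diagonal, Matrix.conjTranspose_apply, Complex.normSq_eq_conj_mul_self]
  simp only [RCLike.star_def]
  ring

lemma sr_jensen {m : Type*} [Fintype m] {a c : ℝ} (ha : 1 < a) (w d : m → ℝ)
    (hw : ∀ j, 0 ≤ w j) (hd : ∀ j, 0 ≤ d j) (hc : ∑ j, w j ≤ c) :
    (∑ j, w j * d j ^ a⁻¹) ^ a ≤ c ^ (a - 1) * ∑ j, w j * d j := by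
  have h := Real.inner_le_weight_mul_Lp_of_nonneg Finset.univ ha.le w (fun j => d j ^ a⁻¹) hw
    (fun j => Real.rpow_nonneg (hd j) _)
  have ha0 : a ≠ 0 := by positivity
  have e : ∀ j, (d j ^ a⁻¹) ^ a = d j := fun j => Real.rpow_inv_rpow (hd j) ha0
  simp only [e] at h
  have hs : 0 ≤ ∑ j, w j := Finset.sum_nonneg fun j _ => hw j
  have hsd : 0 ≤ ∑ j, w j * d j := Finset.sum_nonneg fun j _ => mul_nonneg (hw j) (hd j)
  have h0 : 0 ≤ ∑ j, w j * d j ^ a⁻¹ :=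
    Finset.sum_nonneg fun j _ => mul_nonneg (hw j) (Real.rpow_nonneg (hd j) _)
  calc _ ≤ ((∑ j, w j) ^ (1 - a⁻¹) * (∑ j, w j * d j) ^ a⁻¹) ^ a :=
        Real.rpow_le_rpow h0 h (by positivity)
    _ = (∑ j, w j) ^ (a - 1) * ∑ j, w j * d j := by
        rw [Real.mul_rpow (Real.rpow_nonneg hs _) (Real.rpow_nonneg hsd _),
          Real.rpow_inv_rpow hsd ha0, ← Real.rpow_mul hs]
        congr 2
        field_simp
    _ ≤ _ := by
        gcongr

lemma sr_flip {m : Type*} [Fintype m] [DecidableEq m] (W : Matrix m m ℂ) {c : ℝ} (hc : 0 < c)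
    (h : ((c : ℂ) • (1 : Matrix m m ℂ) - W * Wᴴ).PosSemidef) :
    ((c : ℂ) • (1 : Matrix m m ℂ) - Wᴴ * W).PosSemidef := by
  have h1 := h.conjTranspose_mul_mul_same W
  have h2 := Matrix.posSemidef_conjTranspose_mul_self ((c : ℂ) • (1 : Matrix m m ℂ) - Wᴴ * W)
  have h3 := (h1.add h2).smul (a := ((c⁻¹ : ℝ) : ℂ))
    (by rw [Complex.zero_le_real]; positivity)
  convert h3 using 1
  have hc' : (c : ℂ) ≠ 0 := by exact_mod_cast hc.ne'
  simp only [conjTranspose_sub, conjTranspose_smul, conjTranspose_one, conjTranspose_mul,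
    conjTranspose_conjTranspose, RCLike.star_def, Complex.conj_ofReal, Complex.ofReal_inv]
  have : Wᴴ * ((c : ℂ) • (1 : Matrix m m ℂ) - W * Wᴴ) * W
      + ((c : ℂ) • (1 : Matrix m m ℂ) - Wᴴ * W) * ((c : ℂ) • (1 : Matrix m m ℂ) - Wᴴ * W)
      = (c : ℂ) • ((c : ℂ) • (1 : Matrix m m ℂ) - Wᴴ * W) := by
    simp only [mul_sub, sub_mul, Matrix.mul_assoc, smul_sub, Matrix.smul_mul, Matrix.mul_smul,
      Matrix.one_mul, Matrix.mul_one]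
    abel
  rw [this, smul_smul, inv_mul_cancel₀ hc', one_smul]

lemma sr_trace {m : Type*} [Fintype m] [DecidableEq m] {A : Matrix m m ℂ} (hA : A.IsHermitian)
    (f : ℝ → ℝ) : (mfun f A).trace.re = ∑ i, f (hA.eigenvalues i) := by
  rw [mfun, dif_pos hA, Matrix.IsHermitian.cfc, Unitary.conjStarAlgAut_apply, trace_mul_cycle,
    Unitary.coe_star_mul_self, one_mul, trace_diagonal]
  simp

lemma sr_key {m : Type*} [Fintype m] [DecidableEq m] (W : Matrix m m ℂ) {a c : ℝ} (ha : 1 < a)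
    (hc : 0 < c) (d : m → ℝ) (hd : ∀ j, 0 ≤ d j)
    (h : ((c : ℂ) • (1 : Matrix m m ℂ) - W * Wᴴ).PosSemidef)
    (hB : (Wᴴ * diagonal (fun j => ((d j ^ a⁻¹ : ℝ) : ℂ)) * W).IsHermitian) :
    ∑ i, hB.eigenvalues i ^ a
      ≤ c ^ (a - 1) * (Wᴴ * diagonal (fun j => (d j : ℂ)) * W).trace.re := by
  set E : Matrix m m ℂ := (hB.eigenvectorUnitary).1 with hE
  have hEE : Eᴴ * E = 1 := Unitary.coe_star_mul_self hB.eigenvectorUnitary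
  have hEE' : E * Eᴴ = 1 := Unitary.coe_mul_star_self hB.eigenvectorUnitary
  have hsp := hB.spectral_theorem
  rw [Unitary.conjStarAlgAut_apply] at hsp
  change _ = E * _ * Eᴴ at hsp
  have hdiag : (W * E)ᴴ * diagonal (fun j => ((d j ^ a⁻¹ : ℝ) : ℂ)) * (W * E)
      = diagonal (RCLike.ofReal ∘ hB.eigenvalues) := by
    calc _ = Eᴴ * (Wᴴ * diagonal (fun j => ((d j ^ a⁻¹ : ℝ) : ℂ)) * W) * E := by
          simp only [conjTranspose_mul, Matrix.mul_assoc]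
      _ = Eᴴ * (E * diagonal (RCLike.ofReal ∘ hB.eigenvalues) * Eᴴ) * E := by rw [← hsp]
      _ = (Eᴴ * E) * diagonal (RCLike.ofReal ∘ hB.eigenvalues) * (Eᴴ * E) := by
          simp only [Matrix.mul_assoc]
      _ = _ := by rw [hEE]; simp
  have hlam : ∀ i, hB.eigenvalues i
      = ∑ j, Complex.normSq ((W * E) j i) * d j ^ a⁻¹ := fun i => by
    have := sr_quad (W * E) (fun j => d j ^ a⁻¹) i
    rw [hdiag, diagonal_apply_eq] at this
    exact Complex.ofReal_injective this
  have hsum : ∀ i, ∑ j, Complex.normSq ((W * E) j i) ≤ c := fun i => by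
    have h1 := ((sr_flip W hc h).conjTranspose_mul_mul_same E).diag_nonneg (i := i)
    have h2 : Eᴴ * ((c : ℂ) • (1 : Matrix m m ℂ) - Wᴴ * W) * E
        = (c : ℂ) • (1 : Matrix m m ℂ) - (W * E)ᴴ * diagonal (fun j => ((1 : ℝ) : ℂ)) * (W * E) := by
      have : diagonal (fun j : m => ((1 : ℝ) : ℂ)) = 1 := by simp
      rw [this]
      simp only [mul_sub, sub_mul, Matrix.mul_smul, Matrix.smul_mul, Matrix.mul_one, hEE,
        conjTranspose_mul, Matrix.mul_assoc]
    rw [h2, Matrix.sub_apply, sr_quad (W * E) (fun _ => 1) i] at h1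
    simp only [Matrix.smul_apply, Matrix.one_apply_eq, smul_eq_mul, mul_one] at h1
    rw [← Complex.ofReal_sub, Complex.zero_le_real] at h1
    linarith
  have htr : (Wᴴ * diagonal (fun j => (d j : ℂ)) * W).trace.re
      = ∑ i, ∑ j, Complex.normSq ((W * E) j i) * d j := by
    have : (Wᴴ * diagonal (fun j => (d j : ℂ)) * W).trace
        = ((W * E)ᴴ * diagonal (fun j => (d j : ℂ)) * (W * E)).trace := by
      calc _ = ((Wᴴ * diagonal (fun j => (d j : ℂ)) * W) * (E * Eᴴ)).trace := by
            rw [hEE', Matrix.mul_one]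
        _ = (Eᴴ * ((Wᴴ * diagonal (fun j => (d j : ℂ)) * W) * E)).trace := by
            rw [← Matrix.mul_assoc, Matrix.trace_mul_comm]
        _ = _ := by simp only [conjTranspose_mul, Matrix.mul_assoc]
    rw [this, Matrix.trace, Complex.re_sum]
    refine Finset.sum_congr rfl fun i _ => ?_
    rw [Matrix.diag_apply, sr_quad, Complex.ofReal_re]
  rw [htr, Finset.mul_sum]
  refine Finset.sum_le_sum fun i _ => ?_
  rw [hlam i]
  exact sr_jensen ha _ d (fun j => Complex.normSq_nonneg _) hd (hsum i)

lemma sr_core {m : Type*} [Fintype m] [DecidableEq m] {a c : ℝ} (ha : 1 < a) (hc : 1 ≤ c)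
    (ρ γ : Matrix m m ℂ) (hρ : IsDensity ρ) (hγ : γ.PosDef)
    (h : ((c : ℂ) • γ - ρ).PosSemidef) :
    sandRenyiRel a ρ γ ≤ Real.log c := by
  obtain ⟨hρ1, hρ2⟩ := hρ
  obtain ⟨R, hR⟩ : ∃ R : Matrix m m ℂ, ρ = Rᴴ * R := by
    open scoped MatrixOrder in
    exact CStarAlgebra.nonneg_iff_eq_star_mul_self.mp hρ1.nonneg
  have hc0 : 0 < c := by linarith
  have ha0 : a ≠ 0 := by positivity
  set U : Matrix m m ℂ := (hγ.1.eigenvectorUnitary).1 with hU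
  set d : m → ℝ := hγ.1.eigenvalues with hd
  have hdpos : ∀ j, 0 < d j := hγ.eigenvalues_pos
  have hUU : Uᴴ * U = 1 := Unitary.coe_star_mul_self hγ.1.eigenvectorUnitary
  have hUU' : U * Uᴴ = 1 := Unitary.coe_mul_star_self hγ.1.eigenvectorUnitary
  have hsp : γ = U * diagonal (fun j => (d j : ℂ)) * Uᴴ := hγ.1.spectral_theorem
  have hpow : ∀ t : ℝ, matRpow t γ = U * diagonal (fun j => ((d j ^ t : ℝ) : ℂ)) * Uᴴ := fun t => by
    rw [matRpow, mfun, dif_pos hγ.1]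
    rfl
  have hDH : ∀ t : ℝ, (diagonal (fun j => ((d j ^ t : ℝ) : ℂ)))ᴴ
      = diagonal (fun j => ((d j ^ t : ℝ) : ℂ)) := fun t => by
    rw [diagonal_conjTranspose]; congr 1; ext j; simp [Pi.star_apply]
  have hDD : ∀ s t : ℝ, diagonal (fun j => ((d j ^ s : ℝ) : ℂ)) *
      diagonal (fun j => ((d j ^ t : ℝ) : ℂ)) = diagonal (fun j => ((d j ^ (s + t) : ℝ) : ℂ)) := by
    intro s t
    rw [diagonal_mul_diagonal]; congr 1; ext j
    rw [Real.rpow_add (hdpos j)]; push_cast; rfl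
  have hD1 : diagonal (fun j => (d j : ℂ)) = diagonal (fun j => ((d j ^ (1:ℝ) : ℝ) : ℂ)) := by
    simp
  have hD0 : diagonal (fun j => ((d j ^ (0:ℝ) : ℝ) : ℂ)) = 1 := by simp
  set D : ℝ → Matrix m m ℂ := fun t => diagonal (fun j => ((d j ^ t : ℝ) : ℂ)) with hDdef
  change ∀ t, (D t)ᴴ = D t at hDH
  change ∀ s t, D s * D t = D (s + t) at hDD
  change D 0 = 1 at hD0
  change _ = D 1 at hD1
  change ∀ t, matRpow t γ = U * D t * Uᴴ at hpow
  rw [hD1] at hsp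
  set s : ℝ := (1 - a) / (2 * a) with hs
  set W : Matrix m m ℂ := D (-(1/2)) * Uᴴ * Rᴴ with hW
  have hWH : Wᴴ = R * U * D (-(1/2)) := by
    rw [hW]; simp only [conjTranspose_mul, conjTranspose_conjTranspose, hDH, Matrix.mul_assoc]
  have hWW : ∀ t, Wᴴ * D t * W = R * U * D (t - 1) * Uᴴ * Rᴴ := fun t => by
    calc _ = R * U * (D (-(1/2)) * D t * D (-(1/2))) * Uᴴ * Rᴴ := by
          rw [hWH, hW]; simp only [Matrix.mul_assoc]
      _ = _ := by rw [hDD, hDD]; congr 4; ring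
  have hPSD : ((c : ℂ) • (1 : Matrix m m ℂ) - W * Wᴴ).PosSemidef := by
    convert h.conjTranspose_mul_mul_same (U * D (-(1/2))) using 1
    rw [conjTranspose_mul U, hDH, mul_sub, sub_mul, Matrix.mul_smul, Matrix.smul_mul]
    congr 1
    · congr 1
      symm
      calc _ = D (-(1/2)) * ((Uᴴ * U) * D 1 * (Uᴴ * U)) * D (-(1/2)) := by
            rw [hsp]; simp only [Matrix.mul_assoc]
        _ = _ := by
            rw [hUU, Matrix.one_mul, Matrix.mul_one, hDD, hDD, ← hD0]; congr 1; norm_num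
    · rw [hWH, hW, hR]; simp only [Matrix.mul_assoc]
  have hBH : (Wᴴ * D a⁻¹ * W).IsHermitian := by
    rw [Matrix.IsHermitian]
    simp only [conjTranspose_mul, conjTranspose_conjTranspose, hDH, Matrix.mul_assoc]
  have hGH : (U * D s * Uᴴ)ᴴ = U * D s * Uᴴ := by
    simp only [conjTranspose_mul, conjTranspose_conjTranspose, hDH, Matrix.mul_assoc]
  have hAH : (U * D s * Uᴴ * ρ * (U * D s * Uᴴ)).IsHermitian := by
    rw [Matrix.IsHermitian, conjTranspose_mul _ (U * D s * Uᴴ), conjTranspose_mul _ ρ, hGH, hρ1.1.eq]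
    simp only [Matrix.mul_assoc]
  have hchar : (U * D s * Uᴴ * ρ * (U * D s * Uᴴ)).charpoly = (Wᴴ * D a⁻¹ * W).charpoly := by
    calc _ = ((U * D s * Uᴴ * Rᴴ) * (R * (U * D s * Uᴴ))).charpoly := by
          rw [hR]; simp only [Matrix.mul_assoc]
      _ = ((R * (U * D s * Uᴴ)) * (U * D s * Uᴴ * Rᴴ)).charpoly := Matrix.charpoly_mul_comm _ _
      _ = (R * U * (D s * (Uᴴ * U) * D s) * Uᴴ * Rᴴ).charpoly := by
          simp only [Matrix.mul_assoc]
      _ = _ := by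
          rw [hUU, Matrix.mul_one, hDD, hWW]
          congr 5
          rw [hs]; field_simp; ring
  have heig := (Matrix.IsHermitian.eigenvalues_eq_eigenvalues_iff hAH hBH).mpr hchar
  have hkey := sr_key W ha hc0 d (fun j => (hdpos j).le) hPSD hBH
  have htr1 : (Wᴴ * diagonal (fun j => (d j : ℂ)) * W).trace = 1 := by
    rw [hD1, hWW, sub_self, hD0, Matrix.mul_one, Matrix.mul_assoc R, hUU', Matrix.mul_one,
      Matrix.trace_mul_comm, ← hR, hρ2]
  rw [htr1, Complex.one_re, mul_one] at hkey
  rw [sandRenyiRel, hpow, matRpow, sr_trace hAH, heig]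
  have hnn : 0 ≤ ∑ i, hBH.eigenvalues i ^ a := by
    refine Finset.sum_nonneg fun i _ => Real.rpow_nonneg ?_ _
    have hP : (Wᴴ * D a⁻¹ * W).PosSemidef := by
      refine Matrix.PosSemidef.conjTranspose_mul_mul_same (Matrix.PosSemidef.diagonal ?_) W
      intro j
      exact Complex.zero_le_real.mpr (Real.rpow_nonneg (hdpos j).le _)
    exact hP.eigenvalues_nonneg i
  have ha1 : 0 < a - 1 := by linarith
  rw [inv_mul_le_iff₀ ha1, ← Real.log_rpow hc0]
  rcases hnn.eq_or_lt with h0 | h0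
  · rw [← h0, Real.log_zero]
    exact Real.log_nonneg (Real.one_le_rpow hc ha1.le)
  · exact Real.log_le_log h0 hkey

theorem sandRenyi_avg_le_binEntropy (n : ℕ) (hn : 1 ≤ n) (x : ℝ)
    (hx : x ∈ Set.Ioo (0:ℝ) 1) (a : ℝ) (ha : 1 < a)
    (ρ₁ ρ₂ : Matrix (Fin n) (Fin n) ℂ) (h1 : IsDensity ρ₁) (h2 : IsDensity ρ₂)
    (hAv : (x • ρ₁ + (1 - x) • ρ₂).PosDef) :
    x * sandRenyiRel a ρ₁ (x • ρ₁ + (1 - x) • ρ₂)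
        + (1 - x) * sandRenyiRel a ρ₂ (x • ρ₁ + (1 - x) • ρ₂)
      ≤ binEntropy x := by
  obtain ⟨hx0, hx1⟩ := hx
  have hy0 : 0 < 1 - x := by linarith
  have k1 : sandRenyiRel a ρ₁ (x • ρ₁ + (1 - x) • ρ₂) ≤ Real.log x⁻¹ := by
    refine sr_core ha ((one_le_inv₀ hx0).mpr hx1.le) _ _ h1 hAv ?_
    have := h2.1.smul (a := ((x⁻¹ * (1 - x) : ℝ) : ℂ)) (Complex.zero_le_real.mpr (by positivity))
    convert this using 1
    ext i j
    simp only [Matrix.sub_apply, Matrix.smul_apply, Matrix.add_apply, smul_eq_mul,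
      Complex.real_smul]
    have : (x : ℂ) ≠ 0 := by exact_mod_cast hx0.ne'
    push_cast
    field_simp
    ring
  have k2 : sandRenyiRel a ρ₂ (x • ρ₁ + (1 - x) • ρ₂) ≤ Real.log (1 - x)⁻¹ := by
    refine sr_core ha ((one_le_inv₀ hy0).mpr (by linarith)) _ _ h2 hAv ?_
    have := h1.1.smul (a := (((1 - x)⁻¹ * x : ℝ) : ℂ)) (Complex.zero_le_real.mpr (by positivity))
    convert this using 1
    ext i j
    simp only [Matrix.sub_apply, Matrix.smul_apply, Matrix.add_apply, smul_eq_mul,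
      Complex.real_smul]
    have : (1 - x : ℂ) ≠ 0 := by exact_mod_cast hy0.ne'
    push_cast
    field_simp
    ring
  rw [Real.log_inv] at k1 k2
  rw [binEntropy]
  nlinarith [mul_le_mul_of_nonneg_left k1 hx0.le, mul_le_mul_of_nonneg_left k2 hy0.le]
end
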